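/- arXiv:1708.07761 — 2 statements merged into one kernel-verified Lean document; each statement's English description precedes it below -/
import Mathlib

section
/- Let Q⁴ be a unit 4-cube and let A² be the union of three pairwise-neighboring 2-faces of Q⁴ (three squares pairwise sharing an edge, forming a disk). Then A² meets (shares at least an edge or vertex with) exactly fifteen other 2-faces of Q⁴, and the remaining six 2-faces of Q⁴ disjoint from A² are all contained in a single 3-face C³ of Q⁴. -/
open scoped Classical

/-- A `k`-dimensional face of the cubulation of `ℝⁿ` at scale `1/m`:
free coordinates in `S`, the rest fixed at lattice values `v i / m`. -/
def sFace (n m : ℕ) (v : Fin n → ℤ) (S : Finset (Fin n)) : Set (Fin n → ℝ) :=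
  {x | ∀ i, (i ∈ S → (v i : ℝ) / m ≤ x i ∧ x i ≤ ((v i : ℝ) + 1) / m) ∧
        (i ∉ S → x i = (v i : ℝ) / m)}

/-- The collection of all `k`-faces of the cubulation of `ℝⁿ` at scale `1/m`. -/
def sFaces (n m k : ℕ) : Set (Set (Fin n → ℝ)) :=
  {F | ∃ (v : Fin n → ℤ) (S : Finset (Fin n)), S.card = k ∧ F = sFace n m v S}

/-- The `k`-skeleton of the cubulation of `ℝⁿ` at scale `1/m`. -/
def skeleton (n m k : ℕ) : Set (Fin n → ℝ) := ⋃₀ sFaces n m k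


/-- The closed unit 2-disk. -/
def Disk2 : Set (EuclideanSpace ℝ (Fin 2)) := Metric.closedBall 0 1

/-- The unit 4-cube `[0,1]⁴`. -/
def Q4 : Set (Fin 4 → ℝ) := sFace 4 1 0 Finset.univ

/-- The 2-faces of the unit 4-cube. -/
def twoFacesQ4 : Set (Set (Fin 4 → ℝ)) := {G ∈ sFaces 4 1 2 | G ⊆ Q4}

/-- The 3-faces of the unit 4-cube. -/
def threeFacesQ4 : Set (Set (Fin 4 → ℝ)) := {G ∈ sFaces 4 1 3 | G ⊆ Q4}

/-- Two 2-faces are neighboring if they share an edge (a 1-face). -/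
def Neighboring (F G : Set (Fin 4 → ℝ)) : Prop :=
  F ≠ G ∧ F ∩ G ∈ sFaces 4 1 1

/-!
Three squares of a cube that pairwise share an edge have a common vertex, by Helly's theorem for
boxes. Either all three contain one edge at that vertex, or they are the three squares of a facet
at the vertex.

The first case is a book with three pages, and a book is not a disk. Indeed, in a punctured disk
any nowhere vanishing function is a power of a single one up to a factor with a continuous
logarithm, so the changes of logarithm of two functions around two loops form a singular `2 × 2`
matrix. In the book without the midpoint of its spine, take half circles in the three pages from
one end of the spine to the other, and the maps to the plane that unfold one page to the upper and
the other two pages to the lower half plane: the resulting matrix is invertible.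

In the second case let `d` be the direction normal to the facet. A square that misses all three
squares but does not lie in the opposite facet would be fixed in three coordinates other than `d`,
one for each of the three squares, but a square is fixed in two coordinates only. So the squares
missing the disk are the six squares of the opposite facet, and `24 - 3 - 6 = 15` others meet it.
-/

section Logarithms

open Complex

variable {X : Type*} [TopologicalSpace X]

theorem exists_continuous_exp_eq [SimplyConnectedSpace X] [LocallyPathConnectedSpace X]
    {f : X → ℂ} (hf : Continuous f) (hf₀ : ∀ x, f x ≠ 0) :
    ∃ g : X → ℂ, Continuous g ∧ ∀ x, exp (g x) = f x := by
  obtain ⟨x₀⟩ : Nonempty X := inferInstance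
  obtain ⟨g, ⟨-, hg⟩, -⟩ := isCoveringMapOn_exp.existsUnique_continuousMap_lifts
    (⟨f, hf⟩ : C(X, ℂ)) (exp_log (hf₀ x₀)) hf₀
  exact ⟨g, g.continuous, congrFun hg⟩

theorem sub_eq_sub_of_exp_eq [PreconnectedSpace X] {φ ψ : X → ℂ} (hφ : Continuous φ)
    (hψ : Continuous ψ) (h : ∀ x, exp (φ x) = exp (ψ x)) (x y : X) :
    φ x - φ y = ψ x - ψ y := by
  have hexp : exp (φ y - ψ y) = 1 := by
    rw [exp_sub, h, div_self (exp_ne_zero _)]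
  have hshift : φ = fun z ↦ ψ z + (φ y - ψ y) :=
    isCoveringMap_exp.eq_of_comp_eq hφ (by fun_prop)
      (funext fun z ↦ Subtype.ext (by simp [exp_add, hexp, h])) y (by ring)
  linear_combination congrFun hshift x

/-- `w` is the increment along `γ` of a continuous branch of `log γ`. -/
def IsLogVariation (γ : unitInterval → ℂ) (w : ℂ) : Prop :=
  ∃ φ : unitInterval → ℂ, Continuous φ ∧ (∀ t, exp (φ t) = γ t) ∧ φ 1 - φ 0 = w

theorem IsLogVariation.unique {γ : unitInterval → ℂ} {w w' : ℂ} (hw : IsLogVariation γ w)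
    (hw' : IsLogVariation γ w') : w = w' := by
  obtain ⟨φ, hφ, hφγ, rfl⟩ := hw
  obtain ⟨ψ, hψ, hψγ, rfl⟩ := hw'
  exact sub_eq_sub_of_exp_eq hφ hψ (fun t ↦ (hφγ t).trans (hψγ t).symm) 1 0

theorem exists_isLogVariation {γ : unitInterval → ℂ} (hγ : Continuous γ) (hγ₀ : ∀ t, γ t ≠ 0) :
    ∃ w, IsLogVariation γ w := by
  have := (convex_Icc (0 : ℝ) 1).contractibleSpace ⟨0, by simp⟩
  have := (convex_Icc (0 : ℝ) 1).locallyPathConnectedSpace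
  obtain ⟨φ, hφ, hφγ⟩ := exists_continuous_exp_eq hγ hγ₀
  exact ⟨_, φ, hφ, hφγ, rfl⟩

theorem isLogVariation_mul_exp {c : ℂ} (hc : c ≠ 0) (w : ℂ) :
    IsLogVariation (fun t ↦ c * exp (w * ((t : ℝ) : ℂ))) w :=
  ⟨fun t ↦ log c + w * ((t : ℝ) : ℂ), by fun_prop,
    fun t ↦ by rw [exp_add, exp_log hc], by simp⟩

theorem IsLogVariation.zpow_mul_exp {γ g : unitInterval → ℂ} {w : ℂ} (hγ : IsLogVariation γ w)
    (d : ℤ) (hg : Continuous g) :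
    IsLogVariation (fun t ↦ γ t ^ d * exp (g t)) (d * w + (g 1 - g 0)) := by
  obtain ⟨φ, hφ, hφγ, rfl⟩ := hγ
  refine ⟨fun t ↦ d * φ t + g t, by fun_prop, fun t ↦ ?_, by ring⟩
  rw [exp_add, exp_int_mul, hφγ]

end Logarithms

section Bruschlinsky

open Complex

variable {X Y : Type*} [TopologicalSpace X] [TopologicalSpace Y]

/-- `h` generates the Bruschlinsky group of `X`, the group of homotopy classes of continuous maps
`X → ℂ \ {0}`: each such map is a power of `h` up to a factor with a continuous logarithm.
The Bruschlinsky group is the first cohomology group, so this bounds the first Betti number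
by one. -/
structure IsBruschlinskyGenerator (h : X → ℂ) : Prop where
  continuous : Continuous h
  ne_zero : ∀ x, h x ≠ 0
  exists_eq_zpow_mul_exp : ∀ f : X → ℂ, Continuous f → (∀ x, f x ≠ 0) →
    ∃ (d : ℤ) (g : X → ℂ), Continuous g ∧ ∀ x, f x = h x ^ d * exp (g x)

namespace IsBruschlinskyGenerator

theorem of_simplyConnectedSpace [SimplyConnectedSpace X] [LocallyPathConnectedSpace X] {h : X → ℂ}
    (hh : Continuous h) (hh₀ : ∀ x, h x ≠ 0) : IsBruschlinskyGenerator h where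
  continuous := hh
  ne_zero := hh₀
  exists_eq_zpow_mul_exp f hf hf₀ := by
    obtain ⟨g, hg, hgf⟩ := exists_continuous_exp_eq hf hf₀
    exact ⟨0, g, hg, fun x ↦ by simp [hgf]⟩

theorem comp_of_leftInverse {h : Y → ℂ} (hh : IsBruschlinskyGenerator h) {i : X → Y} {r : Y → X}
    (hi : Continuous i) (hr : Continuous r) (hri : Function.LeftInverse r i) :
    IsBruschlinskyGenerator (h ∘ i) where
  continuous := hh.continuous.comp hi
  ne_zero x := hh.ne_zero (i x)
  exists_eq_zpow_mul_exp f hf hf₀ := by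
    obtain ⟨d, g, hg, hfg⟩ := hh.exists_eq_zpow_mul_exp (f ∘ r) (hf.comp hr) fun y ↦ hf₀ (r y)
    exact ⟨d, g ∘ i, hg.comp hi, fun x ↦ by simpa [hri x] using hfg (i x)⟩

theorem val_ne_zero : IsBruschlinskyGenerator (Subtype.val : {z : ℂ // z ≠ 0} → ℂ) where
  continuous := continuous_subtype_val
  ne_zero z := z.2
  exists_eq_zpow_mul_exp f hf hf₀ := by
    let π : ℂ → {z : ℂ // z ≠ 0} := fun z ↦ ⟨exp z, exp_ne_zero z⟩
    have hπ_log (z : {z : ℂ // z ≠ 0}) : π (log z) = z := Subtype.ext (exp_log z.2)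
    have hπ : Topology.IsQuotientMap π :=
      isCoveringMap_exp.isQuotientMap fun z ↦ ⟨log z, hπ_log z⟩
    obtain ⟨φ, hφ, hφf⟩ := exists_continuous_exp_eq (hf.comp hπ.continuous) fun z ↦ hf₀ (π z)
    obtain ⟨d, hd⟩ : ∃ d : ℤ, φ (2 * Real.pi * I) = φ 0 + d * (2 * Real.pi * I) := by
      rw [← exp_eq_exp_iff_exists_int, hφf, hφf]
      simp [π]
    have hφ_add_two_pi (z : ℂ) : φ (z + 2 * Real.pi * I) - φ z = d * (2 * Real.pi * I) := by
      have := sub_eq_sub_of_exp_eq (φ := fun z ↦ φ (z + 2 * Real.pi * I)) (by fun_prop) hφ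
        (fun z ↦ by simp [hφf, π, exp_periodic z]) z 0
      rw [zero_add, hd] at this
      linear_combination this
    let ψ : ℂ → ℂ := fun z ↦ φ z - d * z
    have hψ_periodic : Function.Periodic ψ (2 * Real.pi * I) := fun z ↦ by
      linear_combination hφ_add_two_pi z
    have hψ_log (z : ℂ) : ψ (log (π z)) = ψ z := by
      obtain ⟨m, hm⟩ := exp_eq_exp_iff_exists_int.1 (congrArg Subtype.val (hπ_log (π z)))
      rw [hm]
      exact hψ_periodic.int_mul m z
    refine ⟨d, fun z ↦ ψ (log z), hπ.continuous_iff.2 ?_, fun z ↦ ?_⟩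
    · rw [show (fun z : {z : ℂ // z ≠ 0} ↦ ψ (log z)) ∘ π = ψ from funext hψ_log]
      fun_prop
    · rw [exp_sub, exp_int_mul, exp_log z.2, hφf, Function.comp_apply, hπ_log,
        mul_div_cancel₀ _ (zpow_ne_zero d z.2)]

theorem exists_logVariation_sub_eq {h f : X → ℂ} (hh : IsBruschlinskyGenerator h)
    (hf : Continuous f) (hf₀ : ∀ x, f x ≠ 0) :
    ∃ d : ℤ, ∀ {x y : X} {γ γ' : Path x y} {u u' w w' : ℂ},
      IsLogVariation (h ∘ γ) u → IsLogVariation (h ∘ γ') u' →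
      IsLogVariation (f ∘ γ) w → IsLogVariation (f ∘ γ') w' → w - w' = d * (u - u') := by
  obtain ⟨d, g, hg, hfg⟩ := hh.exists_eq_zpow_mul_exp f hf hf₀
  have variation {x y : X} {γ : Path x y} {u w : ℂ} (hu : IsLogVariation (h ∘ γ) u)
      (hw : IsLogVariation (f ∘ γ) w) : w = d * u + (g y - g x) := by
    refine hw.unique ?_
    convert hu.zpow_mul_exp d (hg.comp γ.continuous) using 1
    · exact funext fun t ↦ hfg (γ t)
    · simp
  refine ⟨d, fun hu hu' hw hw' ↦ ?_⟩
  rw [variation hu hw, variation hu' hw']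
  ring

theorem logVariation_det_eq_zero {h : X → ℂ} (hh : IsBruschlinskyGenerator h) {f : Fin 2 → X → ℂ}
    (hf : ∀ k, Continuous (f k)) (hf₀ : ∀ k x, f k x ≠ 0) {x y : X} (γ : Fin 3 → Path x y)
    {w : Fin 2 → Fin 3 → ℂ} (hw : ∀ k j, IsLogVariation (f k ∘ γ j) (w k j)) :
    (w 0 1 - w 0 0) * (w 1 2 - w 1 0) - (w 0 2 - w 0 0) * (w 1 1 - w 1 0) = 0 := by
  choose u hu using fun j ↦
    exists_isLogVariation (hh.continuous.comp (γ j).continuous) fun t ↦ hh.ne_zero (γ j t)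
  choose d hd using fun k ↦ hh.exists_logVariation_sub_eq (hf k) (hf₀ k)
  simp only [hd _ (hu _) (hu _) (hw _ _) (hw _ _)]
  ring

end IsBruschlinskyGenerator

end Bruschlinsky

section PuncturedDisk

variable {E : Type*} [NormedAddCommGroup E] [NormedSpace ℝ E]

/-- The retraction of a normed space onto its closed unit ball that is radial outside the ball. -/
noncomputable def radialRetraction (z : E) : Metric.closedBall (0 : E) 1 :=
  ⟨((max 1 ‖z‖)⁻¹ : ℝ) • z, by
    have hpos : 0 < max 1 ‖z‖ := by positivity
    rw [mem_closedBall_zero_iff, norm_smul, Real.norm_of_nonneg (by positivity),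
      inv_mul_le_iff₀ hpos, mul_one]
    exact le_max_right _ _⟩

theorem continuous_radialRetraction : Continuous (radialRetraction (E := E)) := by
  have : Continuous fun z : E ↦ (max 1 ‖z‖)⁻¹ :=
    Continuous.inv₀ (by fun_prop) fun z ↦ by positivity
  exact Continuous.subtype_mk (by fun_prop) _

theorem coe_radialRetraction_of_norm_le_one {z : E} (hz : ‖z‖ ≤ 1) :
    (radialRetraction z : E) = z := by
  simp [radialRetraction, hz]

theorem norm_radialRetraction_of_one_le {z : E} (hz : 1 ≤ ‖z‖) :
    ‖(radialRetraction z : E)‖ = 1 := by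
  have : ‖z‖ ≠ 0 := by positivity
  simp [radialRetraction, hz, norm_smul, this]

theorem eq_of_radialRetraction_eq {p : Metric.closedBall (0 : E) 1} (hp : ‖(p : E)‖ < 1) {z : E}
    (hz : radialRetraction z = p) : z = p := by
  rcases le_total ‖z‖ 1 with hz₁ | hz₁
  · rw [← hz, coe_radialRetraction_of_norm_le_one hz₁]
  · exact absurd (norm_radialRetraction_of_one_le hz₁) (by rw [hz]; exact hp.ne)

theorem exists_isBruschlinskyGenerator_punctured_closedBall (p : Metric.closedBall (0 : ℂ) 1) :
    ∃ h : {z // z ≠ p} → ℂ, IsBruschlinskyGenerator h := by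
  rcases (mem_closedBall_zero_iff.1 p.2).lt_or_eq with hp | hp
  · let i : {z // z ≠ p} → {z : ℂ // z ≠ 0} := fun z ↦
      ⟨z - p, sub_ne_zero.2 fun hz ↦ z.2 (Subtype.ext hz)⟩
    let r : {z : ℂ // z ≠ 0} → {z // z ≠ p} := fun z ↦
      ⟨radialRetraction (p + z), fun hz ↦ z.2 (by simpa using eq_of_radialRetraction_eq hp hz)⟩
    refine ⟨_, IsBruschlinskyGenerator.val_ne_zero.comp_of_leftInverse (i := i) (r := r)
      (by fun_prop) ?_ fun z ↦ ?_⟩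
    · exact (continuous_radialRetraction.comp (by fun_prop)).subtype_mk _
    · refine Subtype.ext (Subtype.ext ?_)
      simpa [r, i] using coe_radialRetraction_of_norm_le_one (mem_closedBall_zero_iff.1 z.1.2)
  · let S : Set ℂ := Metric.closedBall 0 1 \ {(p : ℂ)}
    have hS : Convex ℝ S := ((convex_closedBall (0 : ℂ) 1).mem_extremePoints_iff_convex_sdiff.1
      (by simpa [StrictConvexSpace.extremePoints_closedBall_eq_sphere] using hp)).2
    have h₀ : (0 : ℂ) ∈ S := ⟨by simp, fun h ↦ by simp [← Set.mem_singleton_iff.1 h] at hp⟩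
    have := hS.contractibleSpace ⟨0, h₀⟩
    have := hS.locallyPathConnectedSpace
    let i : {z // z ≠ p} → S := fun z ↦ ⟨z, z.1.2, fun hz ↦ z.2 (Subtype.ext hz)⟩
    let r : S → {z // z ≠ p} := fun z ↦ ⟨⟨z, z.2.1⟩, fun hz ↦ z.2.2 (congrArg Subtype.val hz)⟩
    exact ⟨_, (IsBruschlinskyGenerator.of_simplyConnectedSpace (h := fun _ : S ↦ 1)
      continuous_const fun _ ↦ one_ne_zero).comp_of_leftInverse (i := i) (r := r)
      (by fun_prop) (by fun_prop) fun _ ↦ rfl⟩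

end PuncturedDisk

section Faces

variable {n : ℕ}

/-- The range of one coordinate on a face of the unit cube: all of `[0, 1]` if the coordinate is
free (`none`), a single value if it is fixed (`some b`). -/
def coordSet : Option Bool → Set ℝ
  | none => Set.Icc 0 1
  | some b => {(b.toNat : ℝ)}

/-- The face of the unit cube with code `c`: `c i = none` for a free coordinate `i`, and
`c i = some b` for a coordinate fixed at `b`. -/
def cubeFace (c : Fin n → Option Bool) : Set (Fin n → ℝ) :=
  Set.univ.pi fun i ↦ coordSet (c i)

/-- The free coordinates of the face with code `c`; their number is the dimension of the face. -/
def freeCoords (c : Fin n → Option Bool) : Finset (Fin n) := {i | c i = none}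

theorem mem_freeCoords {c : Fin n → Option Bool} {i : Fin n} : i ∈ freeCoords c ↔ c i = none := by
  simp [freeCoords]

theorem coordSet_nonempty (o : Option Bool) : (coordSet o).Nonempty := by
  cases o <;> simp [coordSet]

theorem coordSet_subset_coordSet_iff {o o' : Option Bool} :
    coordSet o ⊆ coordSet o' ↔ o' = none ∨ o = o' := by
  have hfalse : ¬Set.Icc (0 : ℝ) 1 ⊆ {0} := fun h ↦ by
    simpa using h (Set.right_mem_Icc.2 zero_le_one)
  have htrue : ¬Set.Icc (0 : ℝ) 1 ⊆ {1} := fun h ↦ by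
    simpa using h (Set.left_mem_Icc.2 zero_le_one)
  rcases o with - | - | - <;> rcases o' with - | - | - <;> simp [coordSet, hfalse, htrue]

theorem coordSet_inter_nonempty_iff {o o' : Option Bool} :
    (coordSet o ∩ coordSet o').Nonempty ↔ ∀ b ∈ o, o' ≠ some !b := by
  rcases o with - | - | - <;> rcases o' with - | - | - <;> simp [coordSet]

theorem coordSet_inter_coordSet {o o' : Option Bool} (h : ∀ b ∈ o, o' ≠ some !b) :
    coordSet o ∩ coordSet o' = coordSet (o <|> o') := by
  rcases o with - | - | - <;> rcases o' with - | - | - <;> simp [coordSet] at h ⊢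

theorem cubeFace_subset_cubeFace_iff {c d : Fin n → Option Bool} :
    cubeFace c ⊆ cubeFace d ↔ ∀ i, d i = none ∨ c i = d i := by
  simp [cubeFace, Set.univ_pi_subset_univ_pi_iff, coordSet_subset_coordSet_iff,
    (coordSet_nonempty _).ne_empty]

theorem cubeFace_nonempty (c : Fin n → Option Bool) : (cubeFace c).Nonempty :=
  Set.univ_pi_nonempty_iff.2 fun i ↦ coordSet_nonempty (c i)

theorem cubeFace_injective : Function.Injective (cubeFace (n := n)) := by
  intro c d h
  have hcd := cubeFace_subset_cubeFace_iff.1 h.le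
  have hdc := cubeFace_subset_cubeFace_iff.1 h.ge
  grind

theorem cubeFace_inter_nonempty_iff {c d : Fin n → Option Bool} :
    (cubeFace c ∩ cubeFace d).Nonempty ↔ ∀ i, ∀ b ∈ c i, d i ≠ some !b := by
  simp only [cubeFace, ← Set.pi_inter_distrib, Set.univ_pi_nonempty_iff,
    coordSet_inter_nonempty_iff]

theorem cubeFace_inter_cubeFace {c d : Fin n → Option Bool}
    (h : (cubeFace c ∩ cubeFace d).Nonempty) :
    cubeFace c ∩ cubeFace d = cubeFace fun i ↦ c i <|> d i := by
  rw [cubeFace_inter_nonempty_iff] at h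
  rw [cubeFace, cubeFace, cubeFace, ← Set.pi_inter_distrib]
  exact congrArg _ (funext fun i ↦ coordSet_inter_coordSet (h i))

theorem freeCoords_orElse (c d : Fin n → Option Bool) :
    freeCoords (fun i ↦ c i <|> d i) = freeCoords c ∩ freeCoords d := by
  ext i
  simp [mem_freeCoords]

theorem sFace_one_eq_pi (v : Fin n → ℤ) (S : Finset (Fin n)) :
    sFace n 1 v S =
      Set.univ.pi fun i ↦ if i ∈ S then Set.Icc (v i : ℝ) (v i + 1) else {(v i : ℝ)} := by
  ext x
  simp only [sFace, Nat.cast_one, div_one, Set.mem_univ_pi, Set.mem_ofPred_eq]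
  refine forall_congr' fun i ↦ ?_
  by_cases hi : i ∈ S <;> simp [hi]

theorem cubeFace_eq_sFace (c : Fin n → Option Bool) :
    cubeFace c = sFace n 1 (fun i ↦ ((c i).getD false).toNat) (freeCoords c) := by
  rw [sFace_one_eq_pi, cubeFace]
  congr! 2 with i
  rcases hc : c i with - | b <;> simp [coordSet, mem_freeCoords, hc]

theorem cubeFace_none : cubeFace (fun _ : Fin n ↦ none) = sFace n 1 0 Finset.univ := by
  simp [cubeFace_eq_sFace, freeCoords, Pi.zero_def]

theorem exists_coordSet_eq {z : ℤ} {p : Prop} [Decidable p]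
    (h : (if p then Set.Icc (z : ℝ) (z + 1) else {(z : ℝ)}) ⊆ Set.Icc 0 1) :
    ∃ o, (o = none ↔ p) ∧ coordSet o = if p then Set.Icc (z : ℝ) (z + 1) else {(z : ℝ)} := by
  by_cases hp : p
  · simp only [hp, if_true] at h ⊢
    rw [Set.Icc_subset_Icc_iff (by linarith)] at h
    norm_cast at h
    obtain rfl : z = 0 := by lia
    exact ⟨none, by simp [coordSet]⟩
  · simp only [hp, if_false, Set.singleton_subset_iff, Set.mem_Icc] at h ⊢
    norm_cast at h
    obtain rfl | rfl : z = 0 ∨ z = 1 := by lia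
    exacts [⟨some false, by simp [coordSet]⟩, ⟨some true, by simp [coordSet]⟩]

theorem exists_cubeFace_eq_sFace {v : Fin n → ℤ} {S : Finset (Fin n)}
    (h : sFace n 1 v S ⊆ sFace n 1 0 Finset.univ) :
    ∃ c, freeCoords c = S ∧ cubeFace c = sFace n 1 v S := by
  have hcoord (i : Fin n) :
      (if i ∈ S then Set.Icc (v i : ℝ) (v i + 1) else {(v i : ℝ)}) ⊆ Set.Icc 0 1 := by
    rw [← cubeFace_none, sFace_one_eq_pi, cubeFace, Set.univ_pi_subset_univ_pi_iff] at h
    refine h.resolve_right ?_ i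
    simp only [not_exists, ← ne_eq, ← Set.nonempty_iff_ne_empty]
    intro i
    split_ifs <;> simp
  choose c hcS hc using fun i ↦ exists_coordSet_eq (hcoord i)
  refine ⟨c, by ext; simp [mem_freeCoords, hcS], ?_⟩
  rw [sFace_one_eq_pi, cubeFace, funext hc]

theorem mem_sFaces_and_subset_iff {k : ℕ} {G : Set (Fin n → ℝ)} :
    G ∈ sFaces n 1 k ∧ G ⊆ sFace n 1 0 Finset.univ ↔
      ∃ c, (freeCoords c).card = k ∧ cubeFace c = G := by
  constructor
  · rintro ⟨⟨v, S, hS, rfl⟩, hG⟩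
    obtain ⟨c, rfl, hc⟩ := exists_cubeFace_eq_sFace hG
    exact ⟨c, hS, hc⟩
  · rintro ⟨c, hc, rfl⟩
    refine ⟨⟨_, _, hc, cubeFace_eq_sFace c⟩, ?_⟩
    rw [← cubeFace_none, cubeFace_subset_cubeFace_iff]
    simp

end Faces

section Vertices

variable {n : ℕ}

/-- The code of the face of the unit cube through the vertex `v` with free coordinates `S`. -/
def faceAt (v : Fin n → Bool) (S : Finset (Fin n)) : Fin n → Option Bool :=
  fun i ↦ if i ∈ S then none else some (v i)

theorem mem_cubeFace_faceAt {v : Fin n → Bool} {S : Finset (Fin n)} {x : Fin n → ℝ} :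
    x ∈ cubeFace (faceAt v S) ↔
      ∀ i, (i ∈ S → x i ∈ Set.Icc 0 1) ∧ (i ∉ S → x i = (v i).toNat) := by
  simp only [cubeFace, Set.mem_univ_pi]
  refine forall_congr' fun i ↦ ?_
  by_cases hi : i ∈ S <;> simp [faceAt, coordSet, hi]

theorem cubeFace_inter_faceAt_nonempty_iff {c : Fin n → Option Bool} {v : Fin n → Bool}
    {S : Finset (Fin n)} :
    (cubeFace c ∩ cubeFace (faceAt v S)).Nonempty ↔ ∀ i ∉ S, c i ≠ some !v i := by
  rw [cubeFace_inter_nonempty_iff]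
  refine forall_congr' fun i ↦ ?_
  by_cases hi : i ∈ S <;> rcases c i with - | - | - <;> cases hv : v i <;>
    simp [faceAt, hi, hv]

-- Helly's theorem for boxes.
theorem exists_eq_faceAt_of_pairwise_inter_nonempty {κ : Type*} {c : κ → Fin n → Option Bool}
    (hc : ∀ j k, (cubeFace (c j) ∩ cubeFace (c k)).Nonempty) :
    ∃ v, ∀ k, c k = faceAt v (freeCoords (c k)) := by
  have hcommon (i : Fin n) : ∃ b, ∀ k, c k i = none ∨ c k i = some b := by
    by_cases h : ∃ j b, c j i = some b
    · obtain ⟨j, b, hj⟩ := h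
      refine ⟨b, fun k ↦ ?_⟩
      have := cubeFace_inter_nonempty_iff.1 (hc j k) i b hj
      rcases hk : c k i with - | b' <;> cases b <;> simp_all
    · exact ⟨false, fun k ↦ .inl (Option.eq_none_iff_forall_ne_some.2 fun b hb ↦ h ⟨k, b, hb⟩)⟩
  choose v hv using hcommon
  refine ⟨v, fun k ↦ funext fun i ↦ ?_⟩
  rcases hv i k with h | h <;> simp [faceAt, mem_freeCoords, h]

end Vertices

section Book

variable {n : ℕ}

/-- The book at the vertex `v` with spine in direction `a` and pages in directions `b k`:
the squares of the unit cube at `v` spanned by the directions `a` and `b k`. -/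
def book {κ : Type*} (v : Fin n → Bool) (a : Fin n) (b : κ → Fin n) : Set (Fin n → ℝ) :=
  ⋃ k, cubeFace (faceAt v {a, b k})

/-- The midpoint of the edge of the unit cube at the vertex `v` in direction `a`. -/
noncomputable def spineMidpoint (v : Fin n → Bool) (a : Fin n) : Fin n → ℝ :=
  Function.update (fun i ↦ ((v i).toNat : ℝ)) a (1 / 2)

/-- The half circle around `spineMidpoint v a` that joins the endpoints of the spine inside the
page in direction `b`. -/
noncomputable def pageArc (v : Fin n → Bool) (a b : Fin n) (t : unitInterval) : Fin n → ℝ :=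
  Function.update (Function.update (fun i ↦ ((v i).toNat : ℝ)) b
    |(v b).toNat - Real.sin (Real.pi * t) / 2|) a (1 / 2 - Real.cos (Real.pi * t) / 2)

/-- The chart that sends the spine to the real axis, centred at its midpoint, page `k` to the upper
half plane and all the other pages to the lower half plane. -/
noncomputable def bookChart {κ : Type*} [Fintype κ] [DecidableEq κ] (v : Fin n → Bool) (a : Fin n)
    (b : κ → Fin n) (k : κ) (x : Fin n → ℝ) : ℂ :=
  ((x a - 1 / 2 : ℝ) : ℂ) +
    ((∑ j, (if j = k then 1 else -1) * |x (b j) - (v (b j)).toNat| : ℝ) : ℂ) * Complex.I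

theorem continuous_pageArc (v : Fin n → Bool) (a b : Fin n) : Continuous (pageArc v a b) := by
  unfold pageArc
  fun_prop

theorem pageArc_zero (v : Fin n → Bool) (a b : Fin n) :
    pageArc v a b 0 = Function.update (fun i ↦ ((v i).toNat : ℝ)) a 0 := by
  simp [pageArc]

theorem pageArc_one (v : Fin n → Bool) (a b : Fin n) :
    pageArc v a b 1 = Function.update (fun i ↦ ((v i).toNat : ℝ)) a 1 := by
  norm_num [pageArc]

theorem toNat_mem_Icc (c : Bool) : (c.toNat : ℝ) ∈ Set.Icc (0 : ℝ) 1 := by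
  cases c <;> simp

theorem sin_pi_mul_div_two_mem_Icc (t : unitInterval) :
    Real.sin (Real.pi * t) / 2 ∈ Set.Icc (0 : ℝ) 1 := by
  have hpos : 0 ≤ Real.sin (Real.pi * t) := Real.sin_nonneg_of_nonneg_of_le_pi
    (mul_nonneg Real.pi_pos.le t.2.1) (mul_le_of_le_one_right Real.pi_pos.le t.2.2)
  constructor <;> linarith [Real.sin_le_one (Real.pi * t)]

theorem abs_toNat_sub_mem_Icc (c : Bool) {s : ℝ} (hs : s ∈ Set.Icc (0 : ℝ) 1) :
    |c.toNat - s| ∈ Set.Icc (0 : ℝ) 1 :=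
  ⟨abs_nonneg _, by
    simpa using abs_sub_le_of_le_of_le (toNat_mem_Icc c).1 (toNat_mem_Icc c).2 hs.1 hs.2⟩

theorem abs_abs_toNat_sub_sub (c : Bool) {s : ℝ} (hs : s ∈ Set.Icc (0 : ℝ) 1) :
    |(|c.toNat - s| : ℝ) - c.toNat| = s := by
  obtain ⟨hs₀, hs₁⟩ := hs
  cases c
  · simp [abs_of_nonneg hs₀]
  · rw [Bool.toNat_true, Nat.cast_one, abs_of_nonneg (sub_nonneg.2 hs₁), sub_sub_cancel_left,
      abs_neg, abs_of_nonneg hs₀]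

theorem spineMidpoint_mem (v : Fin n → Bool) (a b : Fin n) :
    spineMidpoint v a ∈ cubeFace (faceAt v {a, b}) := by
  rw [mem_cubeFace_faceAt]
  intro i
  by_cases hi : i = a
  · subst hi
    norm_num [spineMidpoint]
  · simpa [spineMidpoint, hi] using fun _ ↦ toNat_mem_Icc (v i)

theorem pageArc_mem (v : Fin n → Bool) (a b : Fin n) (t : unitInterval) :
    pageArc v a b t ∈ cubeFace (faceAt v {a, b}) := by
  rw [mem_cubeFace_faceAt]
  intro i
  by_cases hi : i = a
  · subst hi
    simp only [pageArc, Function.update_self]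
    refine ⟨fun _ ↦ ?_, by simp⟩
    constructor <;>
      linarith [Real.cos_le_one (Real.pi * t), Real.neg_one_le_cos (Real.pi * t)]
  · by_cases hib : i = b
    · subst hib
      simpa [pageArc, hi] using abs_toNat_sub_mem_Icc (v i) (sin_pi_mul_div_two_mem_Icc t)
    · simp [pageArc, hi, hib]

variable {κ : Type*} [Fintype κ] [DecidableEq κ] {v : Fin n → Bool} {a : Fin n} {b : κ → Fin n}

theorem continuous_bookChart (k : κ) : Continuous (bookChart v a b k) := by
  unfold bookChart
  fun_prop

theorem bookChart_of_mem_page (hba : ∀ k, b k ≠ a) (hb : Function.Injective b) (k : κ) {l : κ}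
    {x : Fin n → ℝ} (hx : x ∈ cubeFace (faceAt v {a, b l})) :
    bookChart v a b k x = ((x a - 1 / 2 : ℝ) : ℂ) +
      (((if l = k then 1 else -1) * |x (b l) - (v (b l)).toNat| : ℝ) : ℂ) * Complex.I := by
  rw [bookChart, Finset.sum_eq_single l (fun j _ hj ↦ ?_) (by simp)]
  have : x (b j) = (v (b j)).toNat := (mem_cubeFace_faceAt.1 hx (b j)).2 (by simp [hba, hb.ne hj])
  simp [this]

theorem bookChart_eq_zero_iff (hba : ∀ k, b k ≠ a) (hb : Function.Injective b) (k : κ)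
    {x : Fin n → ℝ} (hx : x ∈ book v a b) : bookChart v a b k x = 0 ↔ x = spineMidpoint v a := by
  obtain ⟨l, hx⟩ := Set.mem_iUnion.1 hx
  constructor
  · intro h
    rw [bookChart_of_mem_page hba hb k hx, ← Complex.mk_eq_add_mul_I, Complex.ext_iff] at h
    obtain ⟨hre, him⟩ := h
    funext i
    by_cases hia : i = a
    · subst hia
      simpa [spineMidpoint] using sub_eq_zero.1 hre
    by_cases hib : i = b l
    · subst hib
      have hsign : (if l = k then 1 else -1 : ℝ) ≠ 0 := by split_ifs <;> norm_num
      have habs := (mul_eq_zero.1 him).resolve_left hsign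
      simpa [spineMidpoint, hia] using sub_eq_zero.1 (abs_eq_zero.1 habs)
    · simpa [spineMidpoint, hia] using (mem_cubeFace_faceAt.1 hx i).2 (by simp [hia, hib])
  · rintro rfl
    rw [bookChart_of_mem_page hba hb k hx]
    simp [spineMidpoint, hba]

theorem bookChart_pageArc (hba : ∀ k, b k ≠ a) (hb : Function.Injective b) (k l : κ)
    (t : unitInterval) :
    bookChart v a b k (pageArc v a (b l) t) =
      -(1 / 2) * Complex.exp ((if l = k then -1 else 1) * (Real.pi * Complex.I) * (t : ℝ)) := by
  have hexponent : (if l = k then -1 else 1) * (Real.pi * Complex.I) * (t : ℝ) =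
      (((if l = k then -1 else 1) * (Real.pi * t) : ℝ) : ℂ) * Complex.I := by
    split_ifs <;> push_cast <;> ring
  rw [bookChart_of_mem_page hba hb k (pageArc_mem v a (b l) t), hexponent, Complex.exp_mul_I,
    ← Complex.ofReal_cos, ← Complex.ofReal_sin]
  simp only [pageArc, Function.update_self, Function.update_of_ne (hba l),
    abs_abs_toNat_sub_sub _ (sin_pi_mul_div_two_mem_Icc t)]
  split_ifs
  · rw [neg_one_mul, Real.cos_neg, Real.sin_neg]
    push_cast
    ring
  · rw [one_mul]
    push_cast
    ring

end Book

section ThreePages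

variable {n : ℕ} {v : Fin n → Bool} {a : Fin n} {b : Fin 3 → Fin n}

/-- The book without the midpoint of its spine. -/
abbrev PuncturedBook {κ : Type*} (v : Fin n → Bool) (a : Fin n) (b : κ → Fin n) : Type :=
  {x : book v a b // (x : Fin n → ℝ) ≠ spineMidpoint v a}

theorem not_isBruschlinskyGenerator_punctured_book (hba : ∀ k, b k ≠ a)
    (hb : Function.Injective b) (h : PuncturedBook v a b → ℂ) : ¬IsBruschlinskyGenerator h := by
  intro hh
  have hchart₀ (k : Fin 3) (x : PuncturedBook v a b) : bookChart v a b k x.1 ≠ 0 :=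
    mt (bookChart_eq_zero_iff hba hb k x.1.2).1 x.2
  have harc_mem (l : Fin 3) (t : unitInterval) : pageArc v a (b l) t ∈ book v a b :=
    Set.mem_iUnion_of_mem l (pageArc_mem v a (b l) t)
  have harc_ne (l : Fin 3) (t : unitInterval) : pageArc v a (b l) t ≠ spineMidpoint v a := by
    rw [ne_eq, ← bookChart_eq_zero_iff hba hb 0 (harc_mem l t), bookChart_pageArc hba hb]
    simp [Complex.exp_ne_zero]
  let arc (l : Fin 3) : Path
      (⟨⟨pageArc v a (b 0) 0, harc_mem 0 0⟩, harc_ne 0 0⟩ : PuncturedBook v a b)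
      ⟨⟨pageArc v a (b 0) 1, harc_mem 0 1⟩, harc_ne 0 1⟩ :=
    { toFun := fun t ↦ ⟨⟨pageArc v a (b l) t, harc_mem l t⟩, harc_ne l t⟩
      continuous_toFun := ((continuous_pageArc v a (b l)).subtype_mk _).subtype_mk _
      source' := by simp [pageArc_zero]
      target' := by simp [pageArc_one] }
  have hvariation (k : Fin 2) (l : Fin 3) :
      IsLogVariation ((fun x ↦ bookChart v a b k.castSucc x.1) ∘ arc l)
        ((if l = k.castSucc then -1 else 1) * (Real.pi * Complex.I)) := by
    convert isLogVariation_mul_exp (c := -(1 / 2)) (by norm_num) _ using 2 with t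
    exact bookChart_pageArc hba hb k.castSucc l t
  have hdet := hh.logVariation_det_eq_zero
    (fun k ↦ (continuous_bookChart k.castSucc).comp
      (continuous_subtype_val.comp continuous_subtype_val))
    (fun k x ↦ hchart₀ k.castSucc x) arc hvariation
  refine pow_ne_zero 2 Complex.two_pi_I_ne_zero ?_
  have htwo_ne_zero : (2 : Fin 3) ≠ 0 := by decide
  have htwo_ne_one : (2 : Fin 3) ≠ 1 := by decide
  simp only [Fin.castSucc_zero, Fin.castSucc_one, one_ne_zero, zero_ne_one, htwo_ne_zero,
    htwo_ne_one, if_true, if_false] at hdet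
  linear_combination hdet

theorem isEmpty_book_homeomorph_disk (hba : ∀ k, b k ≠ a) (hb : Function.Injective b) :
    IsEmpty (book v a b ≃ₜ Disk2) := by
  refine ⟨fun e ↦ ?_⟩
  let L : EuclideanSpace ℝ (Fin 2) ≃ₗᵢ[ℝ] ℂ := Complex.orthonormalBasisOneI.repr.symm
  let toComplex : Disk2 ≃ₜ Metric.closedBall (0 : ℂ) 1 :=
    L.toHomeomorph.subtype fun x ↦ by simp [Disk2]
  let q : book v a b := ⟨spineMidpoint v a, Set.mem_iUnion_of_mem 0 (spineMidpoint_mem v a (b 0))⟩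
  let e' := e.trans toComplex
  obtain ⟨h, hh⟩ := exists_isBruschlinskyGenerator_punctured_closedBall (e' q)
  let i : PuncturedBook v a b ≃ₜ {z // z ≠ e' q} :=
    e'.subtype fun x ↦ by simp [q, Subtype.ext_iff]
  exact not_isBruschlinskyGenerator_punctured_book hba hb _
    (hh.comp_of_leftInverse i.continuous i.symm.continuous i.symm_apply_apply)

end ThreePages

section Counting

theorem exists_union_eq_of_pairwise_card_inter {α : Type*} [DecidableEq α] {S : Fin 3 → Finset α}
    (hcard : ∀ k, (S k).card = 2) (hinter : ∀ j k, j ≠ k → (S j ∩ S k).card = 1)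
    (hS : ¬∃ a, ∀ k, a ∈ S k) :
    ∃ T : Finset α, T.card = 3 ∧ ∀ j k, j ≠ k → S j ∪ S k = T := by
  have hcard_union {j k : Fin 3} (hjk : j ≠ k) : (S j ∪ S k).card = 3 := by
    have := Finset.card_union_add_card_inter (S j) (S k)
    grind
  have hdisjoint : Disjoint (S 2 ∩ S 0) (S 2 ∩ S 1) := by
    rw [Finset.disjoint_left]
    refine fun a h₀ h₁ ↦ hS ⟨a, fun k ↦ ?_⟩
    fin_cases k <;> grind
  have htwo : S 2 ⊆ S 0 ∪ S 1 := by
    rw [← Finset.inter_eq_left]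
    refine Finset.eq_of_subset_of_card_le Finset.inter_subset_left ?_
    rw [Finset.inter_union_distrib_left, Finset.card_union_of_disjoint hdisjoint,
      hinter 2 0 (by decide), hinter 2 1 (by decide), hcard]
  have hsub : ∀ k, S k ⊆ S 0 ∪ S 1 :=
    Fin.forall_fin_succ.2 ⟨Finset.subset_union_left, Fin.forall_fin_two.2
      ⟨Finset.subset_union_right, htwo⟩⟩
  refine ⟨S 0 ∪ S 1, hcard_union (by decide), fun j k hjk ↦ ?_⟩
  exact Finset.eq_of_subset_of_card_le (Finset.union_subset (hsub j) (hsub k))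
    (by rw [hcard_union hjk, hcard_union (by decide)])

theorem ncard_inter_sUnion_nonempty_add_ncard {α : Type*} {T A : Set (Set α)} (hT : T.Finite)
    (hA : A ⊆ T) (hne : ∀ F ∈ A, F.Nonempty) :
    {G ∈ T | G ∉ A ∧ (G ∩ ⋃₀ A).Nonempty}.ncard + A.ncard + {G ∈ T | G ∩ ⋃₀ A = ∅}.ncard =
      T.ncard := by
  have hmeets {G : Set α} (hG : G ∈ A) : (G ∩ ⋃₀ A).Nonempty := by
    rw [Set.inter_eq_left.2 (Set.subset_sUnion_of_mem hG)]
    exact hne G hG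
  have hmeet : {G ∈ T | G ∉ A ∧ (G ∩ ⋃₀ A).Nonempty} = {G ∈ T | (G ∩ ⋃₀ A).Nonempty} \ A := by
    grind
  have hcompl : {G ∈ T | G ∩ ⋃₀ A = ∅} = T \ {G | (G ∩ ⋃₀ A).Nonempty} := by
    simp [Set.ext_iff, Set.not_nonempty_iff_eq_empty]
  have hsub : A ⊆ {G ∈ T | (G ∩ ⋃₀ A).Nonempty} := fun G hG ↦ ⟨hA hG, hmeets hG⟩
  rw [hmeet, hcompl, Set.ncard_sdiff_add_ncard_of_subset hsub (hT.sep _)]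
  exact Set.ncard_inter_add_ncard_sdiff_eq_ncard T {G | (G ∩ ⋃₀ A).Nonempty} hT

end Counting

section Corner

variable {n : ℕ}

theorem not_exists_mem_of_homeomorph_disk {v : Fin n → Bool} {S : Fin 3 → Finset (Fin n)}
    (hcard : ∀ k, (S k).card = 2) (hS : Function.Injective S)
    (hdisk : Nonempty (↥(⋃ k, cubeFace (faceAt v (S k))) ≃ₜ Disk2)) :
    ¬∃ a, ∀ k, a ∈ S k := by
  rintro ⟨a, ha⟩
  have hpage (k : Fin 3) : ∃ b, b ≠ a ∧ S k = {a, b} := by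
    obtain ⟨b, hb⟩ := Finset.card_eq_one.1
      (by rw [Finset.card_erase_of_mem (ha k), hcard] : ((S k).erase a).card = 1)
    refine ⟨b, Finset.ne_of_mem_erase (hb ▸ Finset.mem_singleton_self b), ?_⟩
    rw [← Finset.insert_erase (ha k), hb]
  choose b hba hSb using hpage
  have hb : Function.Injective b := fun j k hjk ↦ hS (by rw [hSb, hSb, hjk])
  obtain rfl : S = fun k ↦ {a, b k} := funext hSb
  exact (isEmpty_book_homeomorph_disk hba hb).elim hdisk.some

theorem cubeFace_inter_iUnion_faceAt_nonempty_iff {κ : Type*} [Fintype κ] [Nontrivial κ]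
    {g : Fin n → Option Bool} (hg : (freeCoords g)ᶜ.card < Fintype.card κ) {v : Fin n → Bool}
    {S : κ → Finset (Fin n)} {d : Fin n} (hS : ∀ j k, j ≠ k → S j ∪ S k = {d}ᶜ) :
    (cubeFace g ∩ ⋃ k, cubeFace (faceAt v (S k))).Nonempty ↔ g d ≠ some !v d := by
  simp only [Set.inter_iUnion, Set.nonempty_iUnion, cubeFace_inter_faceAt_nonempty_iff]
  have hmem {j k : κ} (hjk : j ≠ k) (i : Fin n) : i ∈ S j ∨ i ∈ S k ↔ i ≠ d := by
    simp [← Finset.mem_union, hS j k hjk]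
  constructor
  · rintro ⟨k, hk⟩
    obtain ⟨j, hj⟩ := exists_ne k
    exact hk d fun hdk ↦ (hmem hj d).1 (.inr hdk) rfl
  · intro hd
    by_contra! h
    choose i hi using h
    have hinj : Function.Injective i := fun j k hjk ↦ by
      by_contra hne
      have := hmem hne (i j)
      grind
    refine hg.not_ge (Finset.card_le_card_of_injOn i ?_ hinj.injOn)
    intro k _
    simp [mem_freeCoords, hi]

/-- The code of the facet of the unit cube on which coordinate `d` is fixed at `b`. -/
def facet (d : Fin n) (b : Bool) : Fin n → Option Bool :=
  Function.update (fun _ ↦ none) d (some b)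

theorem freeCoords_facet (d : Fin n) (b : Bool) : freeCoords (facet d b) = {d}ᶜ := by
  ext i
  by_cases hi : i = d <;> simp [mem_freeCoords, facet, hi]

theorem cubeFace_subset_cubeFace_facet_iff {c : Fin n → Option Bool} {d : Fin n} {b : Bool} :
    cubeFace c ⊆ cubeFace (facet d b) ↔ c d = some b := by
  rw [cubeFace_subset_cubeFace_iff]
  refine ⟨fun h ↦ by simpa [facet] using h d, fun h i ↦ ?_⟩
  by_cases hi : i = d <;> simp [facet, hi, h]

end Corner

section FourCube

theorem mem_twoFacesQ4_iff {G : Set (Fin 4 → ℝ)} :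
    G ∈ twoFacesQ4 ↔ ∃ c, (freeCoords c).card = 2 ∧ cubeFace c = G :=
  mem_sFaces_and_subset_iff

theorem nonempty_of_mem_twoFacesQ4 {G : Set (Fin 4 → ℝ)} (hG : G ∈ twoFacesQ4) : G.Nonempty := by
  obtain ⟨c, -, rfl⟩ := mem_twoFacesQ4_iff.1 hG
  exact cubeFace_nonempty c

theorem cubeFace_facet_mem_threeFacesQ4 (d : Fin 4) (b : Bool) :
    cubeFace (facet d b) ∈ threeFacesQ4 :=
  mem_sFaces_and_subset_iff.2 ⟨_, by simp [freeCoords_facet, Finset.card_compl], rfl⟩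

theorem Neighboring.symm {F G : Set (Fin 4 → ℝ)} (h : Neighboring F G) : Neighboring G F :=
  ⟨h.1.symm, Set.inter_comm F G ▸ h.2⟩

theorem Neighboring.inter_nonempty_and_card_freeCoords_inter {c d : Fin 4 → Option Bool}
    (h : Neighboring (cubeFace c) (cubeFace d)) :
    (cubeFace c ∩ cubeFace d).Nonempty ∧ (freeCoords c ∩ freeCoords d).card = 1 := by
  have hc : cubeFace c ⊆ Q4 := (mem_sFaces_and_subset_iff.2 ⟨c, rfl, rfl⟩).2
  obtain ⟨e, he, hcd⟩ := mem_sFaces_and_subset_iff.1 ⟨h.2, Set.inter_subset_left.trans hc⟩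
  have hne : (cubeFace c ∩ cubeFace d).Nonempty := hcd ▸ cubeFace_nonempty e
  rw [cubeFace_inter_cubeFace hne] at hcd
  rw [← freeCoords_orElse, ← cubeFace_injective hcd]
  exact ⟨hne, he⟩

theorem exists_eq_cubeFace_faceAt_of_pairwise_neighboring {κ : Type*}
    {A : κ → Set (Fin 4 → ℝ)} (hA : ∀ k, A k ∈ twoFacesQ4)
    (hneighbor : Pairwise fun j k ↦ Neighboring (A j) (A k)) :
    ∃ (v : Fin 4 → Bool) (S : κ → Finset (Fin 4)), (∀ k, (S k).card = 2) ∧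
      (∀ j k, j ≠ k → (S j ∩ S k).card = 1) ∧ ∀ k, A k = cubeFace (faceAt v (S k)) := by
  choose c hc hcA using fun k ↦ mem_twoFacesQ4_iff.1 (hA k)
  obtain rfl : (fun k ↦ cubeFace (c k)) = A := funext hcA
  have hinter (j k : κ) : (cubeFace (c j) ∩ cubeFace (c k)).Nonempty := by
    rcases eq_or_ne j k with rfl | hjk
    · simpa using cubeFace_nonempty (c j)
    · exact (hneighbor hjk).inter_nonempty_and_card_freeCoords_inter.1
  obtain ⟨v, hv⟩ := exists_eq_faceAt_of_pairwise_inter_nonempty hinter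
  exact ⟨v, fun k ↦ freeCoords (c k), hc,
    fun j k hjk ↦ (hneighbor hjk).inter_nonempty_and_card_freeCoords_inter.2,
    fun k ↦ congrArg cubeFace (hv k)⟩

theorem ncard_twoFacesQ4 : twoFacesQ4.ncard = 24 := by
  have himage : twoFacesQ4 =
      cubeFace '' ({c | (freeCoords c).card = 2} : Finset (Fin 4 → Option Bool)) := by
    ext G
    simp [mem_twoFacesQ4_iff]
  rw [himage, Set.ncard_image_of_injective _ cubeFace_injective, Set.ncard_coe_finset]
  decide

theorem ncard_twoFacesQ4_subset_facet (d : Fin 4) (b : Bool) :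
    {G ∈ twoFacesQ4 | G ⊆ cubeFace (facet d b)}.ncard = 6 := by
  have himage : {G ∈ twoFacesQ4 | G ⊆ cubeFace (facet d b)} = cubeFace ''
      ({c | (freeCoords c).card = 2 ∧ c d = some b} : Finset (Fin 4 → Option Bool)) := by
    ext G
    simp only [mem_twoFacesQ4_iff, Finset.coe_filter, Finset.mem_univ, true_and, Set.mem_image,
      Set.mem_ofPred_eq, ← cubeFace_subset_cubeFace_facet_iff]
    grind
  rw [himage, Set.ncard_image_of_injective _ cubeFace_injective, Set.ncard_coe_finset]
  clear himage
  revert d b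
  decide

theorem exists_facet_inter_iUnion_eq_empty_iff {A : Fin 3 → Set (Fin 4 → ℝ)}
    (hA : ∀ k, A k ∈ twoFacesQ4) (hneighbor : Pairwise fun j k ↦ Neighboring (A j) (A k))
    (hdisk : Nonempty (↥(⋃ k, A k) ≃ₜ Disk2)) :
    ∃ d b, ∀ G ∈ twoFacesQ4, G ∩ ⋃ k, A k = ∅ ↔ G ⊆ cubeFace (facet d b) := by
  obtain ⟨v, S, hcard, hinter, hAS⟩ :=
    exists_eq_cubeFace_faceAt_of_pairwise_neighboring hA hneighbor
  obtain rfl : A = fun k ↦ cubeFace (faceAt v (S k)) := funext hAS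
  have hS : Function.Injective S := fun j k hjk ↦ by
    by_contra hne
    exact (hneighbor hne).1 (congrArg (fun s ↦ cubeFace (faceAt v s)) hjk)
  obtain ⟨T, hT, hunion⟩ := exists_union_eq_of_pairwise_card_inter hcard hinter
    (not_exists_mem_of_homeomorph_disk hcard hS hdisk)
  obtain ⟨d, hd⟩ : ∃ d, Tᶜ = {d} := Finset.card_eq_one.1 (by simp [Finset.card_compl, hT])
  obtain rfl : T = {d}ᶜ := (compl_eq_comm.1 hd).symm
  refine ⟨d, !v d, fun G hG ↦ ?_⟩
  obtain ⟨g, hg, rfl⟩ := mem_twoFacesQ4_iff.1 hG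
  rw [← Set.not_nonempty_iff_eq_empty, cubeFace_subset_cubeFace_facet_iff,
    cubeFace_inter_iUnion_faceAt_nonempty_iff (by simp [Finset.card_compl, hg]) hunion, not_not]

end FourCube

/-- if `A²` is the union of three pairwise-neighboring 2-faces of the 4-cube
(forming a disk), then exactly fifteen other 2-faces of the 4-cube meet `A²`, and the six
2-faces disjoint from `A²` all lie in a single 3-face of the 4-cube. -/
theorem three_squares_complement (A₁ A₂ A₃ : Set (Fin 4 → ℝ))
    (h₁ : A₁ ∈ twoFacesQ4) (h₂ : A₂ ∈ twoFacesQ4) (h₃ : A₃ ∈ twoFacesQ4)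
    (h₁₂ : Neighboring A₁ A₂) (h₂₃ : Neighboring A₂ A₃) (h₁₃ : Neighboring A₁ A₃)
    (hdisk : Nonempty (↥(A₁ ∪ A₂ ∪ A₃) ≃ₜ ↥Disk2)) :
    {G ∈ twoFacesQ4 | G ≠ A₁ ∧ G ≠ A₂ ∧ G ≠ A₃ ∧ (G ∩ (A₁ ∪ A₂ ∪ A₃)).Nonempty}.ncard = 15 ∧
    {G ∈ twoFacesQ4 | G ∩ (A₁ ∪ A₂ ∪ A₃) = ∅}.ncard = 6 ∧
    ∃ C ∈ threeFacesQ4, ∀ G ∈ twoFacesQ4, G ∩ (A₁ ∪ A₂ ∪ A₃) = ∅ → G ⊆ C := by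
  let A : Fin 3 → Set (Fin 4 → ℝ) := ![A₁, A₂, A₃]
  have hA : ∀ k, A k ∈ twoFacesQ4 := by
    simp [A, Fin.forall_fin_succ, h₁, h₂, h₃]
  have hneighbor : Pairwise fun j k ↦ Neighboring (A j) (A k) := by
    simp [A, Pairwise, Fin.forall_fin_succ, h₁₂, h₂₃, h₁₃, h₁₂.symm, h₂₃.symm, h₁₃.symm]
  have hunion : A₁ ∪ A₂ ∪ A₃ = ⋃ k, A k := by
    simp [A, Set.ext_iff, Fin.exists_fin_succ, or_assoc]
  obtain ⟨d, b, hd⟩ := exists_facet_inter_iUnion_eq_empty_iff hA hneighbor (hunion ▸ hdisk)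
  rw [← hunion] at hd
  have hsix : {G ∈ twoFacesQ4 | G ∩ (A₁ ∪ A₂ ∪ A₃) = ∅}.ncard = 6 := by
    rw [← ncard_twoFacesQ4_subset_facet d b]
    exact congrArg _ (Set.ext fun G ↦ and_congr_right (hd G))
  refine ⟨?_, hsix, _, cubeFace_facet_mem_threeFacesQ4 d b, fun G hG ↦ (hd G hG).1⟩
  have hthree : ({A₁, A₂, A₃} : Set _).ncard = 3 :=
    Set.ncard_eq_three.2 ⟨_, _, _, h₁₂.1, h₁₃.1, h₂₃.1, rfl⟩
  have hsub : {A₁, A₂, A₃} ⊆ twoFacesQ4 := by simp [Set.insert_subset_iff, h₁, h₂, h₃]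
  have hcount := ncard_inter_sUnion_nonempty_add_ncard
    (Set.finite_of_ncard_ne_zero (by simp [ncard_twoFacesQ4])) hsub
    fun F hF ↦ nonempty_of_mem_twoFacesQ4 (hsub hF)
  simp only [Set.sUnion_insert, Set.sUnion_singleton, ← Set.union_assoc, hsix, hthree,
    ncard_twoFacesQ4, Set.mem_insert_iff, Set.mem_singleton_iff, not_or, and_assoc] at hcount
  lia
end

section
/- Let Q³ be a unit 3-cube whose boundary ∂Q³ consists of six squares, and let A² be any nonempty proper connected union of squares of ∂Q³ that is homeomorphic to a disk. Then A² consists of 1, 2, 3, 4, or 5 squares, and the closed complement Cl(∂Q³ \ A²) is also a connected disk; in particular, any disk of 4 or 5 squares in ∂Q³ can be replaced by a complementary disk of at most 2 squares. -/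
open scoped Classical

/-!
Look at the cube from a point outside it. The facets that are seen and the facets that are hidden
project homeomorphically onto the same convex shadow, so each of the two families forms a ball; the
same holds for a perspective in some of the coordinates only. Choosing the viewpoint suitably, one
obtains all the complements that occur, except when the family of facets is symmetric about the
centre and omits a direction. In that case two of the coordinates make up an odd map from the union
of the family to `ℂ \ {0}`. Such a map has no logarithm, because the change of its argument from
`x` to `-x` would be an odd function without zeros, so the union is not simply connected.
-/

/-- The signed coordinate `s * x i` for `q = (i, s)`: the cube `[-1, 1]^ι` is cut out by the
inequalities `signedCoord q x ≤ 1`, one for each of its facets. -/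
def signedCoord {ι : Type*} (q : ι × ℤˣ) (x : ι → ℝ) : ℝ := ((q.2 : ℤ) : ℝ) * x q.1

/-- The cube `[-1, 1]^ι`. -/
def stdCube (ι : Type*) : Set (ι → ℝ) := {x | ∀ q, signedCoord q x ≤ 1}

/-- The facet of `[-1, 1]^ι` with outer normal `s • eᵢ`, for `q = (i, s)`. -/
def stdFacet {ι : Type*} (q : ι × ℤˣ) : Set (ι → ℝ) := {x ∈ stdCube ι | signedCoord q x = 1}

/-- The union of a family of facets of `[-1, 1]^ι`. -/
def facetUnion {ι : Type*} (B : Set (ι × ℤˣ)) : Set (ι → ℝ) := ⋃ q ∈ B, stdFacet q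

section StdCube

variable {ι : Type*}

lemma signedCoord_neg_sign (i : ι) (s : ℤˣ) (x : ι → ℝ) :
    signedCoord (i, -s) x = -signedCoord (i, s) x := by
  simp [signedCoord]

lemma signedCoord_neg (q : ι × ℤˣ) (x : ι → ℝ) : signedCoord q (-x) = -signedCoord q x := by
  simp [signedCoord]

lemma signedCoord_sub (q : ι × ℤˣ) (x y : ι → ℝ) :
    signedCoord q (x - y) = signedCoord q x - signedCoord q y := by
  simp [signedCoord, mul_sub]

lemma signedCoord_add_smul (q : ι × ℤˣ) (a b : ℝ) (x y : ι → ℝ) :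
    signedCoord q (a • x + b • y) = a * signedCoord q x + b * signedCoord q y := by
  simp only [signedCoord, Pi.add_apply, Pi.smul_apply, smul_eq_mul]
  ring

@[fun_prop]
lemma continuous_signedCoord (q : ι × ℤˣ) : Continuous (signedCoord q) := by
  unfold signedCoord; fun_prop

lemma mem_stdCube_iff_forall_mem_Icc {x : ι → ℝ} : x ∈ stdCube ι ↔ ∀ i, x i ∈ Set.Icc (-1) 1 := by
  simp only [stdCube, signedCoord, Set.mem_ofPred_eq, Prod.forall, Set.mem_Icc]
  refine forall_congr' fun i => ⟨fun h => ⟨?_, by simpa using h 1⟩, fun h s => ?_⟩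
  · have := h (-1)
    push_cast at this
    linarith
  · obtain rfl | rfl := Int.units_eq_one_or s
    · simpa using h.2
    · simpa [neg_le] using h.1

lemma mem_stdCube_of_forall_mem_segment {x y z : ι → ℝ} (hx : x ∈ stdCube ι) (hy : y ∈ stdCube ι)
    (hz : ∀ i, z i ∈ segment ℝ (x i) (y i)) : z ∈ stdCube ι := by
  rw [mem_stdCube_iff_forall_mem_Icc] at hx hy ⊢
  exact fun i => (convex_Icc (-1) 1).segment_subset (hx i) (hy i) (hz i)

lemma isCompact_stdCube : IsCompact (stdCube ι) := by
  convert! isCompact_univ_pi fun _ : ι => isCompact_Icc (a := (-1 : ℝ)) (b := 1)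
  ext x
  simp only [mem_stdCube_iff_forall_mem_Icc, Set.mem_univ_pi]

lemma zero_mem_interior_stdCube [Finite ι] : (0 : ι → ℝ) ∈ interior (stdCube ι) := by
  refine mem_interior_iff_mem_nhds.2 (Filter.eventually_all.2 fun q => ?_)
  have hlim := (continuous_signedCoord q).tendsto' 0 0 (by simp [signedCoord])
  exact (hlim.eventually_lt_const one_pos).mono fun _ h => h.le

lemma mem_facetUnion {B : Set (ι × ℤˣ)} {x : ι → ℝ} :
    x ∈ facetUnion B ↔ x ∈ stdCube ι ∧ ∃ q ∈ B, signedCoord q x = 1 := by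
  simp only [facetUnion, stdFacet, Set.mem_iUnion, Set.mem_ofPred_eq]
  grind

lemma facetUnion_subset_stdCube (B : Set (ι × ℤˣ)) : facetUnion B ⊆ stdCube ι :=
  fun _ hx => (mem_facetUnion.1 hx).1

lemma isCompact_stdFacet (q : ι × ℤˣ) : IsCompact (stdFacet q) :=
  isCompact_stdCube.inter_right (isClosed_eq (continuous_signedCoord q) continuous_const)

lemma isCompact_facetUnion [Finite ι] (B : Set (ι × ℤˣ)) : IsCompact (facetUnion B) :=
  B.toFinite.isCompact_biUnion fun q _ => isCompact_stdFacet q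

lemma convex_stdFacet (q : ι × ℤˣ) : Convex ℝ (stdFacet q) := by
  rintro x ⟨hx, hxq⟩ y ⟨hy, hyq⟩ a b ha hb hab
  refine ⟨mem_stdCube_of_forall_mem_segment hx hy fun i => ⟨a, b, ha, hb, hab, rfl⟩, ?_⟩
  rw [signedCoord_add_smul, hxq, hyq, mul_one, mul_one, hab]

lemma locallyPathConnectedSpace_facetUnion [Finite ι] (B : Set (ι × ℤˣ)) :
    LocallyPathConnectedSpace (facetUnion B) := by
  have (q : B) : CompactSpace (stdFacet q.1) :=
    isCompact_iff_compactSpace.1 (isCompact_stdFacet q.1)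
  have (q : B) : LocallyPathConnectedSpace (stdFacet q.1) :=
    (convex_stdFacet q.1).locallyPathConnectedSpace
  let f (z : Σ q : B, stdFacet q.1) : facetUnion B :=
    ⟨z.2, Set.mem_biUnion z.1.2 z.2.2⟩
  have hf : Continuous f := continuous_sigma fun _ => continuous_subtype_val.subtype_mk _
  have hsurj : Function.Surjective f := by
    rintro ⟨x, hx⟩
    obtain ⟨q, hq, hxq⟩ := Set.mem_iUnion₂.1 hx
    exact ⟨⟨⟨q, hq⟩, x, hxq⟩, rfl⟩
  exact (Topology.IsQuotientMap.of_surjective_continuous hsurj hf).locallyPathConnectedSpace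

/-- The centre `s • eᵢ` of the facet `q = (i, s)` of `[-1, 1]^ι`. -/
noncomputable def facetCenter (q : ι × ℤˣ) : ι → ℝ := Pi.single q.1 ((q.2 : ℤ) : ℝ)

lemma signedCoord_facetCenter_self (q : ι × ℤˣ) : signedCoord q (facetCenter q) = 1 := by
  obtain ⟨i, s⟩ := q
  obtain rfl | rfl := Int.units_eq_one_or s <;> simp [signedCoord, facetCenter]

lemma signedCoord_facetCenter_lt_one {q r : ι × ℤˣ} (h : r ≠ q) :
    signedCoord r (facetCenter q) < 1 := by
  obtain ⟨i, s⟩ := q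
  obtain ⟨j, t⟩ := r
  obtain rfl | hij := eq_or_ne j i
  · have hts : t ≠ s := fun hts => h (by rw [hts])
    rw [Int.units_ne_iff_eq_neg.1 hts, signedCoord_neg_sign, signedCoord_facetCenter_self]
    norm_num
  · simp [signedCoord, facetCenter, hij]

lemma facetCenter_mem_stdFacet_iff {q r : ι × ℤˣ} : facetCenter q ∈ stdFacet r ↔ r = q := by
  refine ⟨fun h => ?_, ?_⟩
  · by_contra hne
    exact (signedCoord_facetCenter_lt_one hne).ne h.2
  · rintro rfl
    refine ⟨fun q => ?_, signedCoord_facetCenter_self r⟩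
    obtain rfl | h := eq_or_ne q r
    · exact (signedCoord_facetCenter_self q).le
    · exact (signedCoord_facetCenter_lt_one h).le

lemma stdFacet_injective : Function.Injective (stdFacet (ι := ι)) := by
  intro q r h
  exact (facetCenter_mem_stdFacet_iff.1 (h ▸ facetCenter_mem_stdFacet_iff.2 rfl)).symm

lemma openSegment_facetCenter_subset {q : ι × ℤˣ} {x : ι → ℝ} (hx : x ∈ stdFacet q)
    {B : Set (ι × ℤˣ)} (hq : q ∉ B) :
    openSegment ℝ x (facetCenter q) ⊆ facetUnion Set.univ \ facetUnion B := by
  rintro _ ⟨a, b, ha, hb, hab, rfl⟩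
  have hself : signedCoord q (a • x + b • facetCenter q) = 1 := by
    rw [signedCoord_add_smul, hx.2, signedCoord_facetCenter_self, mul_one, mul_one, hab]
  have hlt {r : ι × ℤˣ} (hr : r ≠ q) : signedCoord r (a • x + b • facetCenter q) < 1 := by
    rw [signedCoord_add_smul]
    nlinarith [hx.1 r, signedCoord_facetCenter_lt_one hr]
  refine ⟨mem_facetUnion.2 ⟨fun r => ?_, q, Set.mem_univ q, hself⟩, fun hB => ?_⟩
  · obtain rfl | hr := eq_or_ne r q
    exacts [hself.le, (hlt hr).le]
  · obtain ⟨-, r, hrB, hr⟩ := mem_facetUnion.1 hB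
    exact (hlt (ne_of_mem_of_not_mem hrB hq)).ne hr

theorem closure_facetUnion_univ_sdiff [Finite ι] (B : Set (ι × ℤˣ)) :
    closure (facetUnion Set.univ \ facetUnion B) = facetUnion Bᶜ := by
  refine (closure_minimal ?_ (isCompact_facetUnion _).isClosed).antisymm fun x hx => ?_
  · rintro x ⟨hx, hxB⟩
    obtain ⟨hcube, q, -, hq⟩ := mem_facetUnion.1 hx
    exact mem_facetUnion.2 ⟨hcube, q, fun hqB => hxB (mem_facetUnion.2 ⟨hcube, q, hqB, hq⟩), hq⟩
  · obtain ⟨hcube, q, hqB, hq⟩ := mem_facetUnion.1 hx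
    refine closure_mono (openSegment_facetCenter_subset ⟨hcube, hq⟩ hqB) ?_
    rw [closure_openSegment]
    exact left_mem_segment ℝ x (facetCenter q)

end StdCube

theorem nonempty_homeomorph_image_of_isCompact {X Y : Type*} [TopologicalSpace X]
    [TopologicalSpace Y] [T2Space Y] {s : Set X} {f : X → Y} (hs : IsCompact s)
    (hf : ContinuousOn f s) (hinj : s.InjOn f) : Nonempty (s ≃ₜ f '' s) := by
  have : CompactSpace s := isCompact_iff_compactSpace.1 hs
  have hemb := (continuousOn_iff_continuous_domRestrict.1 hf).isClosedEmbedding hinj.injective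
  exact ⟨hemb.isEmbedding.toHomeomorph.trans (.setCongr (s.range_domRestrict f))⟩

theorem nonempty_homeomorph_closedBall_of_convex {E : Type*} [NormedAddCommGroup E]
    [NormedSpace ℝ E] [FiniteDimensional ℝ E] {K : Set E} (hconv : Convex ℝ K)
    (hK : IsCompact K) (hint : (interior K).Nonempty) :
    Nonempty (K ≃ₜ Metric.closedBall (0 : EuclideanSpace ℝ (Fin (Module.finrank ℝ E))) 1) := by
  let L : E ≃L[ℝ] EuclideanSpace ℝ (Fin (Module.finrank ℝ E)) := toEuclidean
  have hint' : (interior (L '' K)).Nonempty := by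
    rw [← L.coe_toHomeomorph, ← L.toHomeomorph.image_interior]
    exact hint.image _
  have hLK : IsCompact (L '' K) := hK.image L.continuous
  have hLconv : Convex ℝ (L '' K) := hconv.linear_image L.toLinearMap
  obtain ⟨h, -, hball, -⟩ := exists_homeomorph_image_interior_closure_frontier_eq_unitBall
    hLconv hint' hLK.isBounded
  rw [hLK.isClosed.closure_eq] at hball
  exact ⟨(L.toHomeomorph.image K).trans ((h.image _).trans (.setCongr hball))⟩

/-- The point `x` moved by the fraction `τ` of its way to the viewpoint `p`, in the coordinates in
`J` only. -/
noncomputable def slide {ι : Type*} (J : Set ι) (p : ι → ℝ) (τ : ℝ) (x : ι → ℝ) : ι → ℝ :=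
  fun i => if i ∈ J then x i + τ * (p i - x i) else x i

/-- The view of `[-1, 1]^ι` on a screen parallel to the facet `q`: a perspective view from `p` in
the coordinates in `J`, and an orthogonal projection in the others. -/
noncomputable def viewMap {ι : Type*} (J : Set ι) (p : ι → ℝ) (q : ι × ℤˣ) (x : ι → ℝ) :
    {i // i ≠ q.1} → ℝ :=
  fun i => if i.1 ∈ J then (x i - p i) / signedCoord q (p - x) else x i

/-- For `e = 1` the facets of `[-1, 1]^ι` that are visible from `p`, for `e = -1` those that are
visible from behind the cube; only facets normal to a direction in `J` are taken into account. -/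
def viewSide {ι : Type*} (e : ℝ) (J : Set ι) (p : ι → ℝ) : Set (ι × ℤˣ) :=
  {q | q.1 ∈ J ∧ 0 < e * (signedCoord q p - 1)}

section View

variable {ι : Type*} {J : Set ι} {p x y : ι → ℝ} {q : ι × ℤˣ} {e τ : ℝ}

lemma slide_zero : slide J p 0 x = x := by
  funext i
  simp [slide]

lemma signedCoord_slide_of_mem (hq : q.1 ∈ J) :
    signedCoord q (slide J p τ x) = (1 - τ) * signedCoord q x + τ * signedCoord q p := by
  simp only [signedCoord, slide, if_pos hq]
  ring

lemma signedCoord_slide_of_notMem (hq : q.1 ∉ J) :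
    signedCoord q (slide J p τ x) = signedCoord q x := by
  simp only [signedCoord, slide, if_neg hq]

lemma slide_notMem_stdCube (hx : x ∈ facetUnion (viewSide e J p)) (hτ : 0 < e * τ) :
    slide J p τ x ∉ stdCube ι := by
  obtain ⟨-, q, ⟨hqJ, hq⟩, hqx⟩ := mem_facetUnion.1 hx
  intro h
  have hle := h q
  rw [signedCoord_slide_of_mem hqJ, hqx] at hle
  have hnonpos : e ^ 2 * (τ * (signedCoord q p - 1)) ≤ 0 :=
    mul_nonpos_of_nonneg_of_nonpos (sq_nonneg e) (by linarith)
  have hpos : 0 < e * τ * (e * (signedCoord q p - 1)) := mul_pos hτ hq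
  linarith

lemma exists_slide_mem_stdCube [Finite ι] (he : e ≠ 0) (hx : x ∈ stdCube ι)
    (hside : x ∉ facetUnion (viewSide e J p)) : ∃ τ, 0 < e * τ ∧ slide J p τ x ∈ stdCube ι := by
  have hlt {r : ι × ℤˣ} (hr : r ∈ viewSide e J p) : signedCoord r x < 1 :=
    lt_of_le_of_ne (hx r) fun h => hside (mem_facetUnion.2 ⟨hx, r, hr, h⟩)
  have hev (r : ι × ℤˣ) : ∀ᶠ δ in nhdsWithin (0 : ℝ) (Set.Ioi 0),
      signedCoord r (slide J p (e * δ) x) ≤ 1 := by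
    by_cases hrJ : r.1 ∈ J
    · simp only [signedCoord_slide_of_mem hrJ]
      by_cases hr : 0 < e * (signedCoord r p - 1)
      · have hcont : Continuous fun δ =>
            (1 - e * δ) * signedCoord r x + e * δ * signedCoord r p := by fun_prop
        have hlim := (hcont.tendsto' 0 (signedCoord r x) (by ring)).mono_left
          (nhdsWithin_le_nhds (s := Set.Ioi 0))
        exact (hlim.eventually_lt_const (hlt ⟨hrJ, hr⟩)).mono fun _ h => h.le
      · have hcont : Continuous fun δ => e * δ := by fun_prop
        have hlim := (hcont.tendsto' 0 0 (mul_zero e)).mono_left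
          (nhdsWithin_le_nhds (s := Set.Ioi 0))
        filter_upwards [hlim.eventually_lt_const one_pos, self_mem_nhdsWithin] with δ hδ hpos
        linarith [mul_nonneg (sub_nonneg.2 hδ.le) (sub_nonneg.2 (hx r)),
          mul_nonneg (Set.mem_Ioi.1 hpos).le (sub_nonneg.2 (not_lt.1 hr))]
    · simp only [signedCoord_slide_of_notMem hrJ, hx r, Filter.eventually_true]
  obtain ⟨δ, hδ, hpos⟩ := ((Filter.eventually_all.2 hev).and self_mem_nhdsWithin).exists
  refine ⟨e * δ, ?_, hδ⟩
  rw [← mul_assoc]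
  exact mul_pos (mul_self_pos.2 he) hpos

lemma signedCoord_sub_pos (hqp : 1 < signedCoord q p) (hx : x ∈ stdCube ι) :
    0 < signedCoord q (p - x) := by
  rw [signedCoord_sub]
  linarith [hx q]

lemma signedCoord_sub_slide (hqJ : q.1 ∈ J) :
    signedCoord q (p - slide J p τ x) = (1 - τ) * signedCoord q (p - x) := by
  simp only [signedCoord_sub, signedCoord_slide_of_mem hqJ]
  ring

lemma viewMap_slide (hqJ : q.1 ∈ J) (hτ : τ ≠ 1) :
    viewMap J p q (slide J p τ x) = viewMap J p q x := by
  funext i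
  by_cases hi : i.1 ∈ J
  · simp only [viewMap, if_pos hi, signedCoord_sub_slide hqJ, slide]
    rw [show x i + τ * (p i - x i) - p i = (1 - τ) * (x i - p i) by ring,
      mul_div_mul_left _ _ (sub_ne_zero.2 hτ.symm)]
  · simp only [viewMap, if_neg hi, slide]

lemma eq_slide_of_viewMap_eq (hqJ : q.1 ∈ J) (hqp : 1 < signedCoord q p) (hx : x ∈ stdCube ι)
    (hy : y ∈ stdCube ι) (h : viewMap J p q x = viewMap J p q y) :
    y = slide J p (1 - signedCoord q (p - y) / signedCoord q (p - x)) x := by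
  have hxpos := signedCoord_sub_pos hqp hx
  have hypos := signedCoord_sub_pos hqp hy
  funext i
  by_cases hiJ : i ∈ J
  · suffices hcross : (x i - p i) * signedCoord q (p - y) = (y i - p i) * signedCoord q (p - x) by
      simp only [slide, if_pos hiJ]
      field_simp
      linarith
    by_cases hi : i = q.1
    · simp only [hi, signedCoord, Pi.sub_apply]
      ring
    · have := congrFun h ⟨i, hi⟩
      simp only [viewMap, if_pos hiJ] at this
      rwa [div_eq_div_iff hxpos.ne' hypos.ne'] at this
  · have hi : i ≠ q.1 := fun hi => hiJ (hi ▸ hqJ)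
    simpa only [viewMap, slide, if_neg hiJ] using (congrFun h ⟨i, hi⟩).symm

lemma injOn_viewMap_facetUnion (hqJ : q.1 ∈ J) (hqp : 1 < signedCoord q p) (he : e ≠ 0) :
    (facetUnion (viewSide e J p)).InjOn (viewMap J p q) := by
  intro x hx y hy h
  have hxc := facetUnion_subset_stdCube _ hx
  have hyc := facetUnion_subset_stdCube _ hy
  have hxpos := signedCoord_sub_pos hqp hxc
  have hypos := signedCoord_sub_pos hqp hyc
  have hyx := eq_slide_of_viewMap_eq hqJ hqp hxc hyc h
  have hxy := eq_slide_of_viewMap_eq hqJ hqp hyc hxc h.symm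
  have hle : e * (1 - signedCoord q (p - y) / signedCoord q (p - x)) ≤ 0 :=
    not_lt.1 fun hpos => slide_notMem_stdCube hx hpos (hyx ▸ hyc)
  have hge : e * (1 - signedCoord q (p - x) / signedCoord q (p - y)) ≤ 0 :=
    not_lt.1 fun hpos => slide_notMem_stdCube hy hpos (hxy ▸ hxc)
  have hdepth : signedCoord q (p - y) = signedCoord q (p - x) := by
    rw [one_sub_div hxpos.ne', mul_div_assoc', div_le_iff₀ hxpos, zero_mul] at hle
    rw [one_sub_div hypos.ne', mul_div_assoc', div_le_iff₀ hypos, zero_mul] at hge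
    have : e * (signedCoord q (p - y) - signedCoord q (p - x)) = 0 := by linarith
    exact sub_eq_zero.1 ((mul_eq_zero.1 this).resolve_left he)
  rw [hyx, hdepth, div_self hxpos.ne', sub_self, slide_zero]

lemma continuousOn_viewMap (hqp : 1 < signedCoord q p) :
    ContinuousOn (viewMap J p q) (stdCube ι) := by
  refine continuousOn_pi.2 fun i => ?_
  by_cases hi : i.1 ∈ J
  · simp only [viewMap, if_pos hi]
    exact ContinuousOn.div (by fun_prop)
      ((continuous_signedCoord q).comp (by fun_prop)).continuousOn
      fun x hx => (signedCoord_sub_pos hqp hx).ne'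
  · simp only [viewMap, if_neg hi]
    fun_prop

lemma exists_mem_facetUnion_viewMap_eq [Finite ι] (hqJ : q.1 ∈ J) (hqp : 1 < signedCoord q p)
    (he : e ≠ 0) (hx : x ∈ stdCube ι) :
    ∃ y ∈ facetUnion (viewSide e J p), viewMap J p q y = viewMap J p q x := by
  have hcomp : IsCompact (stdCube ι ∩ viewMap J p q ⁻¹' {viewMap J p q x}) :=
    isCompact_stdCube.of_isClosed_subset
      ((continuousOn_viewMap hqp).preimage_isClosed_of_isClosed isCompact_stdCube.isClosed
        isClosed_singleton) Set.inter_subset_left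
  obtain ⟨y, ⟨hy, hyx⟩, hmin⟩ := hcomp.exists_isMinOn ⟨x, hx, rfl⟩
    (f := fun y => e * signedCoord q (p - y)) (by unfold signedCoord; fun_prop)
  -- A point of the fibre of `x` at extremal depth cannot slide any further.
  refine ⟨y, ?_, hyx⟩
  by_contra hside
  obtain ⟨τ, hτ, hcube⟩ := exists_slide_mem_stdCube he hy hside
  have hdepth := signedCoord_sub_slide (p := p) (τ := τ) (x := y) hqJ
  have hτ1 : τ ≠ 1 := by
    rintro rfl
    simpa [hdepth] using signedCoord_sub_pos hqp hcube
  have hle := isMinOn_iff.1 hmin _ ⟨hcube, (viewMap_slide hqJ hτ1).trans hyx⟩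
  simp only [hdepth] at hle
  nlinarith [mul_pos hτ (signedCoord_sub_pos hqp hy)]

lemma image_viewMap_facetUnion [Finite ι] (hqJ : q.1 ∈ J) (hqp : 1 < signedCoord q p)
    (he : e ≠ 0) :
    viewMap J p q '' facetUnion (viewSide e J p) = viewMap J p q '' stdCube ι := by
  refine (Set.image_mono (facetUnion_subset_stdCube _)).antisymm ?_
  rintro _ ⟨x, hx, rfl⟩
  exact exists_mem_facetUnion_viewMap_eq hqJ hqp he hx

lemma convex_image_viewMap (hqJ : q.1 ∈ J) (hqp : 1 < signedCoord q p) :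
    Convex ℝ (viewMap J p q '' stdCube ι) := by
  rintro _ ⟨x, hx, rfl⟩ _ ⟨y, hy, rfl⟩ a b ha hb hab
  have hX := signedCoord_sub_pos hqp hx
  have hY := signedCoord_sub_pos hqp hy
  set X := signedCoord q (p - x) with hXdef
  set Y := signedCoord q (p - y) with hYdef
  have hpos : 0 < a / X + b / Y := by
    obtain rfl | hapos := ha.eq_or_lt
    · simpa [show b = 1 by linarith] using hY
    · positivity
  -- A perspective view takes weights `a`, `b` to weights proportional to `a / X`, `b / Y`.
  obtain ⟨d, hd⟩ : ∃ d, d * (a / X + b / Y) = 1 := ⟨_, inv_mul_cancel₀ hpos.ne'⟩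
  have hdpos : 0 < d := pos_of_mul_pos_left (hd ▸ one_pos) hpos.le
  have hweights : d * (a / X) + d * (b / Y) = 1 := by rw [← mul_add, hd]
  let z : ι → ℝ := fun i =>
    if i ∈ J then d * (a / X) * x i + d * (b / Y) * y i else a * x i + b * y i
  have hz : z ∈ stdCube ι := by
    refine mem_stdCube_of_forall_mem_segment hx hy fun i => ?_
    by_cases hi : i ∈ J
    · exact ⟨_, _, by positivity, by positivity, hweights, by simp [z, hi]⟩
    · exact ⟨a, b, ha, hb, hab, by simp [z, hi]⟩
  have hdepth : signedCoord q (p - z) = d :=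
    calc signedCoord q (p - z)
        = d * (a / X) * signedCoord q (p - x) + d * (b / Y) * signedCoord q (p - y) := by
          simp only [signedCoord, Pi.sub_apply, z, if_pos hqJ]
          linear_combination (-((q.2 : ℤ) : ℝ) * p q.1) * hweights
      _ = d * (a + b) := by
          rw [← hXdef, ← hYdef]
          field_simp
      _ = d := by rw [hab, mul_one]
  refine ⟨z, hz, funext fun i => ?_⟩
  by_cases hi : i.1 ∈ J
  · simp only [viewMap, if_pos hi, hdepth, ← hXdef, ← hYdef, z, Pi.add_apply, Pi.smul_apply,
      smul_eq_mul]
    rw [div_eq_iff hdpos.ne']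
    linear_combination (p i.1) * hweights
  · simp only [viewMap, if_neg hi, z, Pi.add_apply, Pi.smul_apply, smul_eq_mul]

end View

section Sides

variable {ι : Type*} {J : Set ι} {p : ι → ℝ} {q : ι × ℤˣ} {B : Set (ι × ℤˣ)}

lemma interior_image_viewMap_nonempty [Finite ι] (hqp : 1 < signedCoord q p) :
    (interior (viewMap J p q '' stdCube ι)).Nonempty := by
  -- `lift y` is the point with view `y` in the central slice of the cube parallel to the facet `q`.
  let lift (y : {i // i ≠ q.1} → ℝ) (i : ι) : ℝ :=
    if h : i = q.1 then 0 else if i ∈ J then p i + y ⟨i, h⟩ * signedCoord q p else y ⟨i, h⟩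
  have hcont : Continuous lift := by
    refine continuous_pi fun i => ?_
    simp only [lift]
    split_ifs <;> fun_prop
  have hpos : signedCoord q p ≠ 0 := (one_pos.trans hqp).ne'
  have hview (y) : viewMap J p q (lift y) = y := by
    funext i
    have hdepth : signedCoord q (p - lift y) = signedCoord q p := by
      simp [signedCoord, lift]
    by_cases hi : i.1 ∈ J
    · simp [viewMap, hi, hdepth, lift, i.2, hpos]
    · simp [viewMap, hi, lift, i.2]
  have hlift : lift (viewMap J p q 0) = 0 := by
    funext i
    simp only [lift, viewMap]
    split_ifs <;> simp [hpos]
  have hopen : IsOpen (lift ⁻¹' interior (stdCube ι)) := isOpen_interior.preimage hcont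
  have hsub : lift ⁻¹' interior (stdCube ι) ⊆ viewMap J p q '' stdCube ι :=
    fun y hy => ⟨lift y, interior_subset hy, hview y⟩
  refine ⟨viewMap J p q 0, interior_maximal hsub hopen ?_⟩
  rw [Set.mem_preimage, hlift]
  exact zero_mem_interior_stdCube

theorem nonempty_homeomorph_facetUnion_viewSide [Fintype ι] {n : ℕ} (hn : Fintype.card ι = n + 1)
    {e : ℝ} (he : e ≠ 0) (hqJ : q.1 ∈ J) (hqp : 1 < signedCoord q p) :
    Nonempty (facetUnion (viewSide e J p) ≃ₜ
      Metric.closedBall (0 : EuclideanSpace ℝ (Fin n)) 1) := by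
  have hrank : Module.finrank ℝ ({i // i ≠ q.1} → ℝ) = n := by
    rw [Module.finrank_fintype_fun_eq_card, Fintype.card_subtype_compl, hn,
      Fintype.card_subtype_eq, Nat.add_sub_cancel]
  have hcont := continuousOn_viewMap (J := J) hqp
  obtain ⟨φ⟩ := nonempty_homeomorph_image_of_isCompact (isCompact_facetUnion _)
    (hcont.mono (facetUnion_subset_stdCube (viewSide e J p))) (injOn_viewMap_facetUnion hqJ hqp he)
  obtain ⟨ψ⟩ := nonempty_homeomorph_closedBall_of_convex (convex_image_viewMap hqJ hqp)
    (isCompact_stdCube.image_of_continuousOn hcont) (interior_image_viewMap_nonempty hqp)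
  rw [image_viewMap_facetUnion hqJ hqp he] at φ
  rw [hrank] at ψ
  exact ⟨φ.trans ψ⟩

/-- A family of facets of `[-1, 1]^ι` is one-sided if it contains no two opposite facets. -/
def OneSided (B : Set (ι × ℤˣ)) : Prop := ∀ i s, (i, s) ∈ B → (i, -s) ∉ B

lemma oneSided_singleton (q : ι × ℤˣ) : OneSided {q} := by
  rintro i s rfl h
  exact units_ne_neg_self s (congrArg Prod.snd h).symm

lemma exists_forall_mem_of_not_oneSided (hB : ¬OneSided B) : ∃ i, ∀ s, (i, s) ∈ B := by
  simp only [OneSided] at hB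
  push Not at hB
  obtain ⟨i, s, hs, hsneg⟩ := hB
  refine ⟨i, fun t => ?_⟩
  obtain rfl | h := eq_or_ne t s
  exacts [hs, Int.units_ne_iff_eq_neg.1 h ▸ hsneg]

lemma OneSided.exists_viewpoint (hB : OneSided B) :
    ∃ p : ι → ℝ, (∀ q ∈ B, 1 < signedCoord q p) ∧ ∀ q ∉ B, signedCoord q p < 1 := by
  let p (i : ι) : ℝ := if (i, 1) ∈ B then 2 else if (i, -1) ∈ B then -2 else 0
  refine ⟨p, ?_, ?_⟩
  · rintro ⟨i, s⟩ hq
    obtain rfl | rfl := Int.units_eq_one_or s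
    · norm_num [signedCoord, p, hq]
    · have hopp : (i, 1) ∉ B := fun h => hB i 1 h hq
      norm_num [signedCoord, p, hq, hopp]
  · rintro ⟨i, s⟩ hq
    obtain rfl | rfl := Int.units_eq_one_or s <;> simp only [signedCoord, p, if_neg hq] <;>
      split_ifs <;> norm_num

theorem OneSided.nonempty_homeomorph_facetUnion [Fintype ι] {n : ℕ} (hn : Fintype.card ι = n + 1)
    (hB : OneSided B) (hne : B.Nonempty) :
    Nonempty (facetUnion B ≃ₜ Metric.closedBall (0 : EuclideanSpace ℝ (Fin n)) 1) := by
  obtain ⟨p, hin, hout⟩ := hB.exists_viewpoint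
  obtain ⟨q, hq⟩ := hne
  have hside : viewSide 1 Set.univ p = B := by
    ext r
    simp only [viewSide, Set.mem_univ, true_and, one_mul, sub_pos, Set.mem_ofPred_eq]
    exact ⟨fun h => by_contra fun hr => (hout r hr).not_gt h, hin r⟩
  rw [← hside]
  exact nonempty_homeomorph_facetUnion_viewSide hn one_ne_zero (Set.mem_univ _) (hin q hq)

theorem OneSided.nonempty_homeomorph_facetUnion_far [Fintype ι] {n : ℕ}
    (hn : Fintype.card ι = n + 1) (hB : OneSided B) (hne : B.Nonempty) (hBJ : ∀ q ∈ B, q.1 ∈ J) :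
    Nonempty (facetUnion {q | q.1 ∈ J ∧ q ∉ B} ≃ₜ
      Metric.closedBall (0 : EuclideanSpace ℝ (Fin n)) 1) := by
  obtain ⟨p, hin, hout⟩ := hB.exists_viewpoint
  obtain ⟨q, hq⟩ := hne
  have hside : viewSide (-1) J p = {q | q.1 ∈ J ∧ q ∉ B} := by
    ext r
    simp only [viewSide, neg_one_mul, neg_sub, sub_pos, Set.mem_ofPred_eq]
    exact and_congr_right fun _ => ⟨fun h hr => (hin r hr).not_gt h, hout r⟩
  rw [← hside]
  exact nonempty_homeomorph_facetUnion_viewSide hn (by norm_num) (hBJ q hq) (hin q hq)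

end Sides

section OddMaps

variable {X : Type*} [TopologicalSpace X] [SimplyConnectedSpace X] [LocallyPathConnectedSpace X]

theorem exists_continuous_exp_comp_eq {f : X → ℂ} (hf : Continuous f) (h0 : ∀ x, f x ≠ 0) :
    ∃ g : X → ℂ, Continuous g ∧ ∀ x, Complex.exp (g x) = f x := by
  have huniv : IsSimplyConnected (Set.univ : Set X) :=
    (Homeomorph.Set.univ X).toHomotopyEquiv.simplyConnectedSpace
  obtain ⟨g, hg, hgf⟩ := Complex.exists_continuousOn_eqOn_exp_comp huniv isOpen_univ
    hf.continuousOn (by rintro ⟨x, -, hx⟩; exact h0 x hx)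
  exact ⟨g, continuousOn_univ.1 hg, fun x => hgf (Set.mem_univ x)⟩

theorem exists_map_involution_ne_neg {ν : X → X} (hν : Continuous ν)
    (hinv : Function.Involutive ν) {f : X → ℂ} (hf : Continuous f) (h0 : ∀ x, f x ≠ 0) :
    ∃ x, f (ν x) ≠ -f x := by
  by_contra! hodd
  obtain ⟨g, hg, hgf⟩ := exists_continuous_exp_comp_eq hf h0
  -- The variation of the argument of `f` from `x` to `ν x` is odd, so it vanishes somewhere.
  let a (x : X) : ℝ := (g (ν x) - g x).im
  have ha : Continuous a := by fun_prop
  have haodd (x : X) : a (ν x) = -a x := by simp [a, hinv x]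
  obtain ⟨x, hx⟩ : (0 : ℝ) ∈ Set.range a := by
    have x₀ : X := Classical.arbitrary X
    obtain h | h := le_total (a x₀) 0
    · exact mem_range_of_exists_le_of_exists_ge ha ⟨x₀, h⟩ ⟨ν x₀, by simpa [haodd] using h⟩
    · exact mem_range_of_exists_le_of_exists_ge ha ⟨ν x₀, by simpa [haodd] using h⟩ ⟨x₀, h⟩
  have hexp : Complex.exp (g (ν x) - g x) = -1 := by
    rw [Complex.exp_sub, hgf, hgf, hodd, neg_div, div_self (h0 x)]
  have hreal : g (ν x) - g x = ((g (ν x) - g x).re : ℝ) := Complex.ext rfl hx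
  rw [hreal, ← Complex.ofReal_exp] at hexp
  have : Real.exp (g (ν x) - g x).re = -1 := by exact_mod_cast hexp
  linarith [Real.exp_pos (g (ν x) - g x).re]

end OddMaps

lemma neg_mem_facetUnion {ι : Type*} {B : Set (ι × ℤˣ)}
    (hsymm : ∀ i s, (i, s) ∈ B → (i, -s) ∈ B) {x : ι → ℝ} (hx : x ∈ facetUnion B) :
    -x ∈ facetUnion B := by
  obtain ⟨hcube, ⟨i, s⟩, hq, hqx⟩ := mem_facetUnion.1 hx
  refine mem_facetUnion.2 ⟨?_, (i, -s), hsymm i s hq, ?_⟩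
  · rintro ⟨j, t⟩
    rw [signedCoord_neg, ← signedCoord_neg_sign]
    exact hcube _
  · rw [signedCoord_neg, signedCoord_neg_sign, neg_neg, hqx]

theorem exists_mem_ne_of_forall_neg_mem {ι : Type*} [Finite ι] {B : Set (ι × ℤˣ)}
    [SimplyConnectedSpace (facetUnion B)]
    (hsymm : ∀ i s, (i, s) ∈ B → (i, -s) ∈ B) (i k : ι) : ∃ q ∈ B, q.1 ≠ i ∧ q.1 ≠ k := by
  by_contra! hdir
  have := locallyPathConnectedSpace_facetUnion B
  let ν (x : facetUnion B) : facetUnion B := ⟨-x, neg_mem_facetUnion hsymm x.2⟩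
  let f (x : facetUnion B) : ℂ := x.1 i + x.1 k * Complex.I
  have h0 (x : facetUnion B) : f x ≠ 0 := by
    obtain ⟨-, q, hq, hqx⟩ := mem_facetUnion.1 x.2
    intro hfx
    have hi : x.1 i = 0 := by simpa [f] using congrArg Complex.re hfx
    have hk : x.1 k = 0 := by simpa [f] using congrArg Complex.im hfx
    by_cases hqi : q.1 = i
    · simp [signedCoord, hqi, hi] at hqx
    · simp [signedCoord, hdir q hq hqi, hk] at hqx
  have hcoord (l : ι) : Continuous fun x : facetUnion B => (x.1 l : ℂ) :=
    Complex.continuous_ofReal.comp ((continuous_apply l).comp continuous_subtype_val)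
  have hf : Continuous f := (hcoord i).add ((hcoord k).mul continuous_const)
  obtain ⟨x, hx⟩ := exists_map_involution_ne_neg (ν := ν) (by fun_prop)
    (fun x => Subtype.ext (neg_neg x.1)) hf h0
  exact hx (by simp only [f, ν, Pi.neg_apply, Complex.ofReal_neg]; ring)

lemma nonempty_homeomorph_facetUnion_compl_of_forall {B : Set (Fin 3 × ℤˣ)} {i j : Fin 3}
    [SimplyConnectedSpace (facetUnion B)]
    (hi : ∀ s, (i, s) ∈ B) (hj : ∀ s, (j, s) ∉ B) : Nonempty (facetUnion Bᶜ ≃ₜ Disk2) := by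
  have hij : i ≠ j := fun h => hj 1 (h ▸ hi 1)
  have hthird : ∀ i j : Fin 3, i ≠ j → ∃ k, ∀ l, l = i ∨ l = j ∨ l = k := by decide
  obtain ⟨k, hk⟩ := hthird i j hij
  obtain ⟨s, hs, hsneg⟩ : ∃ s, (k, s) ∈ B ∧ (k, -s) ∉ B := by
    by_contra! hkB
    have hsymm (l : Fin 3) (s : ℤˣ) (h : (l, s) ∈ B) : (l, -s) ∈ B := by
      obtain rfl | rfl | rfl := hk l
      exacts [hi _, absurd h (hj s), hkB s h]
    obtain ⟨⟨l, t⟩, hl, hli, hlk⟩ := exists_mem_ne_of_forall_neg_mem hsymm i k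
    obtain rfl | rfl | rfl := hk l
    exacts [hli rfl, hj t hl, hlk rfl]
  have hcompl : Bᶜ = {q | q.1 ∈ ({j, k} : Set (Fin 3)) ∧ q ∉ ({(k, s)} : Set (Fin 3 × ℤˣ))} := by
    have hki : k ≠ i := fun h => hsneg (h ▸ hi (-s))
    have hkj : k ≠ j := fun h => hj s (h ▸ hs)
    ext ⟨l, t⟩
    simp only [Set.mem_compl_iff, Set.mem_ofPred_eq, Set.mem_insert_iff, Set.mem_singleton_iff,
      Prod.mk.injEq]
    obtain rfl | rfl | rfl := hk l
    · simp [hi t, hij, hki.symm]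
    · simp [hj t, hkj.symm]
    · obtain rfl | h := eq_or_ne t s
      · simp [hs]
      · rw [Int.units_ne_iff_eq_neg.1 h]
        simp [hsneg]
  rw [hcompl]
  exact (oneSided_singleton (k, s)).nonempty_homeomorph_facetUnion_far (Fintype.card_fin 3)
    (Set.singleton_nonempty _) (by rintro q rfl; simp)

theorem nonempty_homeomorph_facetUnion_compl {B : Set (Fin 3 × ℤˣ)} (hB : B ≠ Set.univ)
    [SimplyConnectedSpace (facetUnion B)] :
    Nonempty (facetUnion Bᶜ ≃ₜ Disk2) := by
  have hcard : Fintype.card (Fin 3) = 2 + 1 := Fintype.card_fin 3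
  by_cases hBside : OneSided B
  · have hne : B.Nonempty := by
      obtain ⟨x⟩ : Nonempty (facetUnion B) := inferInstance
      obtain ⟨-, q, hq, -⟩ := mem_facetUnion.1 x.2
      exact ⟨q, hq⟩
    have hcompl : Bᶜ = {q | q.1 ∈ Set.univ ∧ q ∉ B} := by
      ext
      simp
    rw [hcompl]
    exact hBside.nonempty_homeomorph_facetUnion_far hcard hne fun q _ => Set.mem_univ q.1
  by_cases hCside : OneSided Bᶜ
  · exact hCside.nonempty_homeomorph_facetUnion hcard (Set.nonempty_compl.2 hB)
  obtain ⟨i, hi⟩ := exists_forall_mem_of_not_oneSided hBside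
  obtain ⟨j, hj⟩ := exists_forall_mem_of_not_oneSided hCside
  exact nonempty_homeomorph_facetUnion_compl_of_forall hi hj

section Cubulation

variable {n m k : ℕ} [NeZero m] {v w : Fin n → ℤ} {S : Finset (Fin n)} {x : Fin n → ℝ}

lemma mem_sFace_iff : x ∈ sFace n m v S ↔
    ∀ i, (i ∈ S → (v i : ℝ) ≤ m * x i ∧ m * x i ≤ v i + 1) ∧ (i ∉ S → m * x i = v i) := by
  have hm : 0 < (m : ℝ) := Nat.cast_pos.2 (NeZero.pos m)
  simp only [sFace, Set.mem_ofPred_eq, div_le_iff₀' hm, le_div_iff₀' hm, eq_div_iff hm.ne',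
    mul_comm (x _)]

lemma lowerCorner_mem_sFace : (fun i => (v i : ℝ) / m) ∈ sFace n m v S := by
  have hm : (m : ℝ) ≠ 0 := NeZero.ne _
  exact mem_sFace_iff.2 fun i => by simp [mul_div_cancel₀ _ hm]

lemma upperCorner_mem_sFace :
    (fun i => ((v i : ℝ) + if i ∈ S then 1 else 0) / m) ∈ sFace n m v S := by
  have hm : (m : ℝ) ≠ 0 := NeZero.ne _
  refine mem_sFace_iff.2 fun i => ?_
  simp only [mul_div_cancel₀ _ hm]
  exact ⟨fun hi => by simp [hi], fun hi => by simp [hi]⟩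

lemma eq_or_eq_update_of_sFace_subset {i : Fin n}
    (h : sFace n m w {i}ᶜ ⊆ sFace n m v Finset.univ) :
    w = v ∨ w = Function.update v i (v i + 1) := by
  have hm : (m : ℝ) ≠ 0 := NeZero.ne _
  have hlow (j : Fin n) : v j ≤ w j ∧ w j ≤ v j + 1 := by
    have := (mem_sFace_iff.1 (h lowerCorner_mem_sFace) j).1 (Finset.mem_univ j)
    simp only [mul_div_cancel₀ _ hm] at this
    exact_mod_cast this
  have hfree {j : Fin n} (hj : j ≠ i) : w j = v j := by
    have := ((mem_sFace_iff.1 (h upperCorner_mem_sFace) j).1 (Finset.mem_univ j)).2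
    simp only [mul_div_cancel₀ _ hm, Finset.mem_compl, Finset.mem_singleton, hj,
      not_false_eq_true, if_true] at this
    have hle : w j + 1 ≤ v j + 1 := by exact_mod_cast this
    linarith [(hlow j).1]
  obtain hi | hi : w i = v i ∨ w i = v i + 1 := by have := hlow i; omega
  · refine .inl (funext fun j => ?_)
    obtain rfl | hj := eq_or_ne j i
    exacts [hi, hfree hj]
  · refine .inr (Function.eq_update_iff.2 ⟨hi, fun j hj => hfree hj⟩)

lemma mem_sFace_compl_singleton_iff {i : Fin n} (hw : ∀ j ≠ i, w j = v j)
    (hi : v i ≤ w i ∧ w i ≤ v i + 1) :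
    x ∈ sFace n m w {i}ᶜ ↔ x ∈ sFace n m v Finset.univ ∧ m * x i = w i := by
  have hi' : (v i : ℝ) ≤ w i ∧ (w i : ℝ) ≤ v i + 1 := by exact_mod_cast hi
  simp only [mem_sFace_iff, Finset.mem_compl, Finset.mem_singleton, not_not, Finset.mem_univ,
    forall_const, not_true_eq_false, IsEmpty.forall_iff, and_true]
  refine ⟨fun h => ⟨fun j => ?_, (h i).2 rfl⟩, fun ⟨h, hxi⟩ j => ⟨fun hj => hw j hj ▸ h j, ?_⟩⟩
  · obtain rfl | hj := eq_or_ne j i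
    · rwa [(h j).2 rfl]
    · exact hw j hj ▸ (h j).1 hj
  · rintro rfl
    exact hxi

/-- The affine chart `x ↦ 2 * (m * x - v) - 1` taking the `n`-cube of the cubulation of `ℝⁿ` at
scale `1/m` with lower corner `v / m` to `[-1, 1]ⁿ`. -/
noncomputable def cubeChart (n m : ℕ) [NeZero m] (v : Fin n → ℤ) : (Fin n → ℝ) ≃ₜ (Fin n → ℝ) :=
  .piCongrRight fun i => affineHomeomorph (2 * (m : ℝ)) (-(2 * v i + 1)) (by simp [NeZero.ne])

lemma cubeChart_apply (x : Fin n → ℝ) (i : Fin n) :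
    cubeChart n m v x i = 2 * m * x i - (2 * v i + 1) := rfl

/-- The facet of the `n`-cube with lower corner `v / m` that corresponds to the facet `q` of
`[-1, 1]ⁿ`. -/
noncomputable def cubeFacet (m : ℕ) [NeZero m] (v : Fin n → ℤ) (q : Fin n × ℤˣ) :
    Set (Fin n → ℝ) :=
  cubeChart n m v ⁻¹' stdFacet q

lemma cubeChart_mem_stdCube_iff :
    cubeChart n m v x ∈ stdCube (Fin n) ↔ ∀ i, (v i : ℝ) ≤ m * x i ∧ m * x i ≤ v i + 1 := by
  simp only [mem_stdCube_iff_forall_mem_Icc, cubeChart_apply, Set.mem_Icc]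
  refine forall_congr' fun i => ⟨fun h => ⟨?_, ?_⟩, fun h => ⟨?_, ?_⟩⟩ <;> linarith [h.1, h.2]

lemma sFace_univ : sFace n m v Finset.univ = cubeChart n m v ⁻¹' stdCube (Fin n) := by
  ext x
  simp only [mem_sFace_iff, Set.mem_preimage, cubeChart_mem_stdCube_iff, Finset.mem_univ,
    forall_const, not_true_eq_false, IsEmpty.forall_iff, and_true]

lemma cubeFacet_neg_one (i : Fin n) : cubeFacet m v (i, -1) = sFace n m v {i}ᶜ := by
  ext x
  rw [mem_sFace_compl_singleton_iff (fun _ _ => rfl) ⟨le_rfl, by simp⟩, sFace_univ]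
  refine and_congr_right fun _ => ?_
  simp only [signedCoord, cubeChart_apply, Units.val_neg, Units.val_one, Int.cast_neg,
    Int.cast_one]
  constructor <;> intro h <;> linarith

lemma cubeFacet_one (i : Fin n) :
    cubeFacet m v (i, 1) = sFace n m (Function.update v i (v i + 1)) {i}ᶜ := by
  ext x
  rw [mem_sFace_compl_singleton_iff (v := v) (fun j hj => Function.update_of_ne hj _ _) (by simp),
    sFace_univ, Function.update_self]
  refine and_congr_right fun _ => ?_
  simp only [signedCoord, cubeChart_apply, Units.val_one, Int.cast_one, Int.cast_add]
  constructor <;> intro h <;> linarith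

theorem sFaces_subset_sFace_univ_eq_range (v : Fin (k + 1) → ℤ) :
    {G ∈ sFaces (k + 1) m k | G ⊆ sFace (k + 1) m v Finset.univ} = Set.range (cubeFacet m v) := by
  ext G
  constructor
  · rintro ⟨⟨w, S, hS, rfl⟩, hsub⟩
    obtain ⟨i, hi⟩ : ∃ i, Sᶜ = {i} := by
      rw [← Finset.card_eq_one, Finset.card_compl, hS, Fintype.card_fin, Nat.add_sub_cancel_left]
    obtain rfl : S = {i}ᶜ := by rw [← hi, compl_compl]
    obtain rfl | rfl := eq_or_eq_update_of_sFace_subset hsub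
    exacts [⟨(i, -1), cubeFacet_neg_one i⟩, ⟨(i, 1), cubeFacet_one i⟩]
  · rintro ⟨⟨i, s⟩, rfl⟩
    have hcard : ({i}ᶜ : Finset (Fin (k + 1))).card = k := by simp [Finset.card_compl]
    refine ⟨?_, ?_⟩
    · obtain rfl | rfl := Int.units_eq_one_or s
      exacts [⟨_, _, hcard, cubeFacet_one i⟩, ⟨_, _, hcard, cubeFacet_neg_one i⟩]
    · rw [sFace_univ]
      exact Set.preimage_mono fun x hx => hx.1

lemma cubeFacet_injective : Function.Injective (cubeFacet m v) :=
  (cubeChart n m v).surjective.preimage_injective.comp stdFacet_injective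

lemma sUnion_image_cubeFacet (B : Set (Fin n × ℤˣ)) :
    ⋃₀ (cubeFacet m v '' B) = cubeChart n m v ⁻¹' facetUnion B := by
  simp only [Set.sUnion_image, facetUnion, Set.preimage_iUnion, cubeFacet]

theorem closure_sUnion_range_sdiff_sUnion_image (B : Set (Fin n × ℤˣ)) :
    closure (⋃₀ Set.range (cubeFacet m v) \ ⋃₀ (cubeFacet m v '' B)) =
      ⋃₀ (Set.range (cubeFacet m v) \ cubeFacet m v '' B) := by
  rw [Set.range_sdiff_image cubeFacet_injective, ← Set.image_univ, sUnion_image_cubeFacet,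
    sUnion_image_cubeFacet, sUnion_image_cubeFacet, ← Set.preimage_sdiff,
    ← Homeomorph.preimage_closure, closure_facetUnion_univ_sdiff]

end Cubulation

lemma simplyConnectedSpace_of_homeomorph_disk2 {X : Type*} [TopologicalSpace X]
    (h : Nonempty (X ≃ₜ Disk2)) : SimplyConnectedSpace X := by
  obtain ⟨φ⟩ := h
  have : ContractibleSpace Disk2 := (convex_closedBall _ _).contractibleSpace
    ⟨0, Metric.mem_closedBall_self zero_le_one⟩
  have := φ.contractibleSpace
  infer_instance

theorem nonempty_homeomorph_sUnion_range_sdiff_image_cubeFacet {m : ℕ} [NeZero m] {v : Fin 3 → ℤ}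
    {B : Set (Fin 3 × ℤˣ)} (hB : B ≠ Set.univ)
    [SimplyConnectedSpace (⋃₀ (cubeFacet m v '' B))] :
    Nonempty (⋃₀ (Set.range (cubeFacet m v) \ cubeFacet m v '' B) ≃ₜ Disk2) := by
  have φ (C : Set (Fin 3 × ℤˣ)) : ⋃₀ (cubeFacet m v '' C) ≃ₜ facetUnion C :=
    (cubeChart 3 m v).subtype fun x => by rw [sUnion_image_cubeFacet]; rfl
  have := (φ B).symm.toHomotopyEquiv.simplyConnectedSpace
  obtain ⟨ψ⟩ := nonempty_homeomorph_facetUnion_compl hB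
  rw [Set.range_sdiff_image cubeFacet_injective]
  exact ⟨(φ Bᶜ).trans ψ⟩

theorem cube_boundary_disk_complement_general {m : ℕ} [NeZero m] (v : Fin 3 → ℤ)
    (𝒜 : Set (Set (Fin 3 → ℝ)))
    (h𝒜 : 𝒜 ⊆ {G ∈ sFaces 3 m 2 | G ⊆ sFace 3 m v Finset.univ})
    (hproper : 𝒜 ≠ {G ∈ sFaces 3 m 2 | G ⊆ sFace 3 m v Finset.univ})
    [SimplyConnectedSpace (⋃₀ 𝒜)] :
    (1 ≤ 𝒜.ncard ∧ 𝒜.ncard ≤ 5) ∧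
    closure ((⋃₀ {G ∈ sFaces 3 m 2 | G ⊆ sFace 3 m v Finset.univ}) \ ⋃₀ 𝒜) =
      ⋃₀ ({G ∈ sFaces 3 m 2 | G ⊆ sFace 3 m v Finset.univ} \ 𝒜) ∧
    IsConnected (⋃₀ ({G ∈ sFaces 3 m 2 | G ⊆ sFace 3 m v Finset.univ} \ 𝒜)) ∧
    Nonempty (↥(⋃₀ ({G ∈ sFaces 3 m 2 | G ⊆ sFace 3 m v Finset.univ} \ 𝒜)) ≃ₜ ↥Disk2) ∧
    (4 ≤ 𝒜.ncard → ({G ∈ sFaces 3 m 2 | G ⊆ sFace 3 m v Finset.univ} \ 𝒜).ncard ≤ 2) := by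
  rw [sFaces_subset_sFace_univ_eq_range] at h𝒜 hproper ⊢
  have hcard : (Set.range (cubeFacet m v)).ncard = 6 := by
    rw [Set.ncard_range_of_injective cubeFacet_injective]
    simp
  have hfin : (Set.range (cubeFacet m v)).Finite := Set.finite_range _
  have hpos : 0 < 𝒜.ncard := by
    obtain ⟨x⟩ : Nonempty (⋃₀ 𝒜) := inferInstance
    obtain ⟨G, hG, -⟩ := x.2
    exact (Set.ncard_pos (hfin.subset h𝒜)).2 ⟨G, hG⟩
  have hlt := Set.ncard_lt_ncard (h𝒜.ssubset_of_ne hproper) hfin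
  have hsdiff := Set.ncard_sdiff_add_ncard_of_subset h𝒜 hfin
  obtain ⟨B, -, rfl⟩ := Set.subset_range_iff_exists_image_eq.1 h𝒜
  have hdisk : Nonempty (⋃₀ (Set.range (cubeFacet m v) \ cubeFacet m v '' B) ≃ₜ Disk2) :=
    nonempty_homeomorph_sUnion_range_sdiff_image_cubeFacet fun hB =>
      hproper (by rw [hB, Set.image_univ])
  have := simplyConnectedSpace_of_homeomorph_disk2 hdisk
  exact ⟨by omega, closure_sUnion_range_sdiff_sUnion_image B,
    isConnected_iff_connectedSpace.2 inferInstance, hdisk, by omega⟩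

/-- let `Q³` be a 3-cube of the cubulation of ℝ³ and `A²` a nonempty proper
connected union of squares of `∂Q³` homeomorphic to a disk. Then `A²` consists of 1 to 5
squares, and the closed complement `Cl(∂Q³ \ A²)` is the union of the remaining squares and
is again a connected disk; in particular a disk of 4 or 5 squares has a complementary disk
of at most 2 squares. -/
theorem cube_boundary_disk_complement (v : Fin 3 → ℤ)
    (𝒜 : Set (Set (Fin 3 → ℝ)))
    (h𝒜 : 𝒜 ⊆ {G ∈ sFaces 3 1 2 | G ⊆ sFace 3 1 v Finset.univ})
    (hne : 𝒜.Nonempty)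
    (hproper : 𝒜 ≠ {G ∈ sFaces 3 1 2 | G ⊆ sFace 3 1 v Finset.univ})
    (hconn : IsConnected (⋃₀ 𝒜))
    (hdisk : Nonempty (↥(⋃₀ 𝒜) ≃ₜ ↥Disk2)) :
    (1 ≤ 𝒜.ncard ∧ 𝒜.ncard ≤ 5) ∧
    closure ((⋃₀ {G ∈ sFaces 3 1 2 | G ⊆ sFace 3 1 v Finset.univ}) \ ⋃₀ 𝒜) =
      ⋃₀ ({G ∈ sFaces 3 1 2 | G ⊆ sFace 3 1 v Finset.univ} \ 𝒜) ∧
    IsConnected (⋃₀ ({G ∈ sFaces 3 1 2 | G ⊆ sFace 3 1 v Finset.univ} \ 𝒜)) ∧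
    Nonempty (↥(⋃₀ ({G ∈ sFaces 3 1 2 | G ⊆ sFace 3 1 v Finset.univ} \ 𝒜)) ≃ₜ ↥Disk2) ∧
    (4 ≤ 𝒜.ncard → ({G ∈ sFaces 3 1 2 | G ⊆ sFace 3 1 v Finset.univ} \ 𝒜).ncard ≤ 2) := by
  have := simplyConnectedSpace_of_homeomorph_disk2 hdisk
  exact cube_boundary_disk_complement_general v 𝒜 h𝒜 hproper
end
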